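/- Let T_{B,m} = S_{B,m} ∪ {⟨A⟩ ⇒ ◇A : A over B, ||A|| ≤ m−2} ∪ {⟨□↓A⟩ ⇒ A : A over B, ||A|| ≤ m−2}, where S_{B,m} is the set of L◇-provable bracket-free sequents with at most 2 antecedent types, all types over B of length ≤ m. Then for any L◇ sequent Γ ⇒ A_{n+1} whose yield consists of types over B each of length ≤ m: Γ ⇒ A_{n+1} is provable in L◇ if and only if it is derivable from T_{B,m} using only the Cut rule. -/

import Mathlib

/-- Types of the bracketed Lambek calculus. -/
inductive PTy where
  | prim : ℕ → PTy
  | ldiv : PTy → PTy → PTy   -- ldiv A B = A \ B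
  | rdiv : PTy → PTy → PTy   -- rdiv B A = B / A
  | mul  : PTy → PTy → PTy
  | dia  : PTy → PTy
  | box  : PTy → PTy
deriving DecidableEq

/-- Type trees: leaves labeled by types, internal nodes are brackets. -/
inductive PTree where
  | leaf : PTy → PTree
  | node : List PTree → PTree

abbrev PHedge := List PTree

/-- Contexts: a hedge with one distinguished hole. -/
inductive PCtx where
  | hole : PHedge → PHedge → PCtx
  | brk  : PCtx → PHedge → PHedge → PCtx

/-- Substitution of a hedge for the hole of a context. -/
def PCtx.plug : PCtx → PHedge → PHedge
  | .hole pre post, D => pre ++ D ++ post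
  | .brk c pre post, D => pre ++ (PTree.node (c.plug D) :: post)

/-- All primitive types occurring in the type belong to `B`. -/
def PTy.over (B : Finset ℕ) : PTy → Prop
  | .prim p => p ∈ B
  | .ldiv A C => A.over B ∧ C.over B
  | .rdiv C A => C.over B ∧ A.over B
  | .mul A C => A.over B ∧ C.over B
  | .dia A => A.over B
  | .box A => A.over B

/-- Length of a type. -/
def lenP : PTy → ℕ
  | .prim _ => 1
  | .ldiv A B => lenP A + lenP B
  | .rdiv B A => lenP B + lenP A
  | .mul A B => lenP A + lenP B
  | .dia A => lenP A + 2
  | .box A => lenP A + 2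

mutual
/-- The yield of a tree: the sequence of types labeling its leaves. -/
def yieldTree : PTree → List PTy
  | .leaf A => [A]
  | .node ts => yieldHedge ts
/-- The yield of a hedge. -/
def yieldHedge : List PTree → List PTy
  | [] => []
  | t :: ts => yieldTree t ++ yieldHedge ts
end
/-- L◇ : the Lambek calculus with brackets
(the antecedent must be nonempty in the right rules for the divisions). -/
inductive PProv : PHedge → PTy → Prop where
  | id (p) : PProv [.leaf (.prim p)] (.prim p)
  | ldivL (G : PHedge) (D : PCtx) (A B C) :
      PProv G A → PProv (D.plug [.leaf B]) C →
      PProv (D.plug (G ++ [.leaf (.ldiv A B)])) C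
  | ldivR (Pi : PHedge) (A B) : Pi ≠ [] →
      PProv (.leaf A :: Pi) B → PProv Pi (.ldiv A B)
  | rdivL (G : PHedge) (D : PCtx) (A B C) :
      PProv G A → PProv (D.plug [.leaf B]) C →
      PProv (D.plug (.leaf (.rdiv B A) :: G)) C
  | rdivR (Pi : PHedge) (A B) : Pi ≠ [] →
      PProv (Pi ++ [.leaf A]) B → PProv Pi (.rdiv B A)
  | mulL (G : PCtx) (A B C) :
      PProv (G.plug [.leaf A, .leaf B]) C → PProv (G.plug [.leaf (.mul A B)]) C
  | mulR (G D : PHedge) (A B) :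
      PProv G A → PProv D B → PProv (G ++ D) (.mul A B)
  | diaL (G : PCtx) (A B) :
      PProv (G.plug [.node [.leaf A]]) B → PProv (G.plug [.leaf (.dia A)]) B
  | diaR (G : PHedge) (A) :
      PProv G A → PProv [.node G] (.dia A)
  | boxL (G : PCtx) (A B) :
      PProv (G.plug [.leaf A]) B → PProv (G.plug [.node [.leaf (.box A)]]) B
  | boxR (G : PHedge) (A) :
      PProv [.node G] A → PProv G (.box A)
  | cut (G : PHedge) (D : PCtx) (A B) :
      PProv G A → PProv (D.plug [.leaf A]) B → PProv (D.plug G) B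
/-- Derivability of a sequent from a set of sequents using the Cut rule only. -/
inductive CutDeriv (S : Set (PHedge × PTy)) : PHedge → PTy → Prop where
  | base (G A) : (G, A) ∈ S → CutDeriv S G A
  | cut (G : PHedge) (D : PCtx) (A B) :
      CutDeriv S G A → CutDeriv S (D.plug [.leaf A]) B → CutDeriv S (D.plug G) B

/-- The set `S_{B,m}` of L◇-provable bracket-free sequents with at most 2 antecedent
types, all types built over `B` of length at most `m`. -/
def SBm (B : Finset ℕ) (m : ℕ) : Set (PHedge × PTy) :=
  {s | ∃ (L : List PTy) (A : PTy),
        s = (L.map PTree.leaf, A) ∧ L.length ≤ 2 ∧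
        (∀ T ∈ A :: L, PTy.over B T ∧ lenP T ≤ m) ∧
        PProv (L.map PTree.leaf) A}

/-- The set `T_{B,m}`. -/
def TBm (B : Finset ℕ) (m : ℕ) : Set (PHedge × PTy) :=
  SBm B m ∪
  {s | ∃ A : PTy, PTy.over B A ∧ lenP A ≤ m - 2 ∧
        s = ([PTree.node [PTree.leaf A]], PTy.dia A)} ∪
  {s | ∃ A : PTy, PTy.over B A ∧ lenP A ≤ m - 2 ∧
        s = ([PTree.node [PTree.leaf (PTy.box A)]], A)}

/-!
The substantial direction follows Pentus. Label the primitive types and bracket pairs of a cut-free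
derivation so that every letter occurs at most twice in the sequent, and interpret types in the free
group, where both sides of a derivable sequent have the same value. An interpolant of a segment then
has a reduced word, so its length is the norm of the value of the segment, and it suffices to find
segments of small norm. Among at least three types and no brackets, Pentus' lemma on products equal
to `1` in a free group provides one. Any pair of brackets shares its two letters with
some type; the value of the pair or of its content is then at least two letters shorter than that
type, which is why the axioms for `◇` and `□↓` are needed only up to length `m - 2`.
-/

namespace BracketedLambek

/-! ### Bracketed token sequences -/

/-- A letter of a linearised hedge: a leaf carrying a type in `τ`, or an opening or closing bracket
carrying a label in `ι`. -/
inductive Token (ι τ : Type*) where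
  | ty : τ → Token ι τ
  | op : ι → Token ι τ
  | cl : ι → Token ι τ

namespace Token

variable {ι κ μ σ τ υ : Type*}

/-- Relabelling of the brackets by `g` and of the leaves by `f`. -/
def map (g : ι → κ) (f : τ → σ) : Token ι τ → Token κ σ
  | ty a => ty (f a)
  | op i => op (g i)
  | cl i => cl (g i)

@[simp] theorem map_ty (g : ι → κ) (f : τ → σ) (a : τ) : (ty a).map g f = ty (f a) := rfl

@[simp] theorem map_op (g : ι → κ) (f : τ → σ) (i : ι) : (op i).map g f = op (g i) := rfl

@[simp] theorem map_cl (g : ι → κ) (f : τ → σ) (i : ι) : (cl i).map g f = cl (g i) := rfl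

theorem map_eq_ty {g : ι → κ} {f : τ → σ} {t : Token ι τ} {b : σ} :
    t.map g f = ty b ↔ ∃ a, t = ty a ∧ f a = b := by
  cases t <;> simp

theorem map_eq_op {g : ι → κ} {f : τ → σ} {t : Token ι τ} {j : κ} :
    t.map g f = op j ↔ ∃ i, t = op i ∧ g i = j := by
  cases t <;> simp

theorem map_eq_cl {g : ι → κ} {f : τ → σ} {t : Token ι τ} {j : κ} :
    t.map g f = cl j ↔ ∃ i, t = cl i ∧ g i = j := by
  cases t <;> simp

theorem map_map (g : ι → κ) (f : τ → σ) (g' : κ → μ) (f' : σ → υ) (t : Token ι τ) :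
    (t.map g f).map g' f' = t.map (g' ∘ g) (f' ∘ f) := by
  cases t <;> rfl

end Token

section Runs

variable {ι κ σ τ : Type*}

/-- Transitions of the pushdown automaton recognising bracketings without empty pairs. A state
`(b, s)` holds the stack `s` of open labels and a flag `b` telling whether the innermost open pair
(or the top level) already has content. -/
def Runs : Bool × List ι → List (Token ι τ) → Bool × List ι → Prop
  | p, [], q => p = q
  | (_, s), .ty _ :: X, q => Runs (true, s) X q
  | (_, s), .op i :: X, q => Runs (false, i :: s) X q
  | (b, s), .cl i :: X, q => ∃ s', b = true ∧ s = i :: s' ∧ Runs (true, s') X q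

/-- A nonempty token sequence whose brackets match, labels included, with no empty bracket pair. -/
def WellBracketed (X : List (Token ι τ)) : Prop := Runs (false, []) X (true, [])

variable {b c : Bool} {s t u : List ι} {i : ι} {p q r : Bool × List ι}
  {L P Q R S T T' X Y : List (Token ι τ)}

theorem runs_append : Runs p (X ++ Y) q ↔ ∃ r, Runs p X r ∧ Runs r Y q := by
  induction X generalizing p with
  | nil => simp [Runs]
  | cons x X ih =>
    cases x <;> simp only [List.cons_append, Runs, ih]
    constructor
    · rintro ⟨s', hb, hs, r, h, h'⟩
      exact ⟨r, ⟨s', hb, hs, h⟩, h'⟩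
    · rintro ⟨r, ⟨s', hb, hs, h⟩, h'⟩
      exact ⟨s', hb, hs, r, h, h'⟩

theorem Runs.unique (h : Runs p X q) (h' : Runs p X r) : q = r := by
  induction X generalizing p with
  | nil => exact h.symm.trans h'
  | cons x X ih =>
    cases x with
    | ty a => exact ih h h'
    | op i => exact ih h h'
    | cl i =>
      obtain ⟨s, -, hs, h⟩ := h
      obtain ⟨s', -, hs', h'⟩ := h'
      obtain rfl : s = s' := (List.cons.inj (hs.symm.trans hs')).2
      exact ih h h'

theorem Runs.append_stack (h : Runs (b, s) X (c, t)) (u : List ι) :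
    Runs (b, s ++ u) X (c, t ++ u) := by
  induction X generalizing b s with
  | nil => simp_all [Runs]
  | cons x X ih =>
    cases x with
    | ty a => exact ih h
    | op i => exact ih (s := i :: s) h
    | cl i =>
      obtain ⟨s', hb, rfl, h⟩ := h
      exact ⟨s' ++ u, hb, rfl, ih h⟩

theorem Runs.of_false (h : Runs (false, s) X q) (hX : X ≠ []) : Runs (b, s) X q := by
  match X, hX, h with
  | .ty _ :: _, _, h => exact h
  | .op _ :: _, _, h => exact h

theorem Runs.false_of_empty_stack (h : Runs (b, []) X q) (hX : X ≠ []) :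
    Runs (false, []) X q := by
  match X, hX, h with
  | .ty _ :: _, _, h => exact h
  | .op _ :: _, _, h => exact h

theorem Runs.eq_nil_of_false (h : Runs p X (false, [])) : X = [] := by
  induction X using List.reverseRecOn with
  | nil => rfl
  | append_singleton X x _ =>
    obtain ⟨r, -, h⟩ := runs_append.1 h
    cases x <;> simp [Runs] at h

theorem Runs.map (g : ι → κ) (f : τ → σ) (h : Runs (b, s) X (c, t)) :
    Runs (b, s.map g) (X.map (Token.map g f)) (c, t.map g) := by
  induction X generalizing b s with
  | nil => simp_all [Runs]
  | cons x X ih =>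
    cases x with
    | ty a => exact ih h
    | op i => exact ih (s := i :: s) h
    | cl i =>
      obtain ⟨s', hb, rfl, h⟩ := h
      exact ⟨s'.map g, hb, rfl, ih h⟩

/-- A run whose relabelling never reaches below its initial stack `s` does not do so either. -/
theorem Runs.of_map (g : ι → κ) (f : τ → σ) {t₀ : List κ} (h : Runs (b, s ++ u) X q)
    (h₀ : Runs (b, s.map g) (X.map (Token.map g f)) (c, t₀)) :
    ∃ t, Runs (b, s) X (c, t) ∧ q = (c, t ++ u) ∧ t.map g = t₀ := by
  induction X generalizing b s with
  | nil =>
    obtain ⟨rfl, rfl⟩ : b = c ∧ s.map g = t₀ := by simpa [Runs] using h₀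
    exact ⟨s, rfl, h.symm, rfl⟩
  | cons x X ih =>
    cases x with
    | ty a => exact ih h h₀
    | op i => exact ih (s := i :: s) h h₀
    | cl i =>
      obtain ⟨s', hb, hs, h⟩ := h
      obtain ⟨s₀, -, hs₀, h₀⟩ := h₀
      obtain ⟨j, v, rfl, -, rfl⟩ := List.map_eq_cons_iff.1 hs₀
      obtain ⟨rfl, rfl⟩ : j = i ∧ v ++ u = s' := by simpa using hs
      obtain ⟨t, ht, hq, hmap⟩ := ih h h₀
      exact ⟨t, ⟨v, hb, rfl, ht⟩, hq, hmap⟩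

theorem exists_of_append_singleton_eq_append {τ : Type*} {x : τ} {X K₁ K₂ : List τ}
    (h : X ++ [x] = K₁ ++ K₂) (h₂ : K₂ ≠ []) : ∃ S, K₂ = S ++ [x] ∧ X = K₁ ++ S := by
  rcases List.append_eq_append_iff.1 h with ⟨S, rfl, hS⟩ | ⟨S, rfl, rfl⟩
  · obtain ⟨rfl, rfl⟩ : S = [] ∧ K₂ = [x] := by
      simpa [h₂] using List.append_eq_singleton_iff.1 hS.symm
    exact ⟨[], rfl, by simp⟩
  · exact ⟨S, rfl, rfl⟩

namespace WellBracketed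

theorem singleton_ty (a : τ) : WellBracketed [(.ty a : Token ι τ)] := rfl

theorem ne_nil (h : WellBracketed X) : X ≠ [] := by
  rintro rfl
  simp [WellBracketed, Runs] at h

theorem runs (h : WellBracketed X) (b : Bool) (s : List ι) : Runs (b, s) X (true, s) :=
  (Runs.append_stack h s).of_false h.ne_nil

theorem runs_iff (h : WellBracketed X) : Runs p X q ↔ (true, p.2) = q :=
  ⟨(h.runs p.1 p.2).unique, fun e => e ▸ h.runs p.1 p.2⟩

theorem append (hX : WellBracketed X) (hY : WellBracketed Y) : WellBracketed (X ++ Y) :=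
  runs_append.2 ⟨_, hX, hY.runs _ _⟩

theorem leaf_append (a : τ) (h : X = [] ∨ WellBracketed X) : WellBracketed (.ty a :: X) := by
  rcases h with rfl | h
  exacts [singleton_ty a, (singleton_ty a).append h]

theorem append_leaf (a : τ) (h : X = [] ∨ WellBracketed X) : WellBracketed (X ++ [.ty a]) := by
  rcases h with rfl | h
  exacts [singleton_ty a, h.append (singleton_ty a)]

theorem bracket (h : WellBracketed X) (i : ι) : WellBracketed (.op i :: (X ++ [.cl i])) :=
  runs_append.2 ⟨_, h.runs false [i], [], rfl, rfl, rfl⟩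

theorem bracket_iff :
    WellBracketed (.op i :: (X ++ [.cl i])) ↔ Runs (false, [i]) X (true, [i]) := by
  simp only [WellBracketed, Runs, runs_append]
  constructor
  · rintro ⟨⟨_, _⟩, h, s, rfl, rfl, hs⟩
    obtain rfl : s = [] := by simpa using hs
    exact h
  · exact fun h => ⟨_, h, [], rfl, rfl, rfl⟩

theorem replace (h : WellBracketed (L ++ (T ++ R))) (hT : WellBracketed T)
    (hT' : WellBracketed T') : WellBracketed (L ++ (T' ++ R)) := by
  unfold WellBracketed at h ⊢
  simpa only [runs_append, hT.runs_iff, hT'.runs_iff] using h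

theorem map (h : WellBracketed X) (g : ι → κ) (f : τ → σ) :
    WellBracketed (X.map (Token.map g f)) :=
  Runs.map g f h

theorem nil_or_of_overlap (h : WellBracketed (P ++ Q)) (h' : WellBracketed (Q ++ S)) :
    (P = [] ∨ WellBracketed P) ∧ (Q = [] ∨ WellBracketed Q) ∧ (S = [] ∨ WellBracketed S) := by
  rcases eq_or_ne Q [] with rfl | hQ
  · exact ⟨.inr (by simpa using h), .inl rfl, .inr h'⟩
  obtain ⟨⟨b, t⟩, hP, hPQ⟩ := runs_append.1 h
  obtain ⟨⟨c, s⟩, hQ', hS⟩ := runs_append.1 h'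
  have hcs := (Runs.append_stack hQ' t).of_false hQ |>.unique hPQ
  obtain ⟨rfl, rfl, rfl⟩ : c = true ∧ s = [] ∧ t = [] := by simpa using hcs
  refine ⟨?_, .inr hQ', ?_⟩
  · cases b
    · exact .inl hP.eq_nil_of_false
    · exact .inr hP
  · exact or_iff_not_imp_left.2 hS.false_of_empty_stack

theorem eq_of_singleton_eq {x : Token ι τ} (hT : WellBracketed T) (h : [x] = L ++ (T ++ R)) :
    L = [] ∧ T = [x] ∧ R = [] := by
  obtain ⟨rfl, hTR⟩ : L = [] ∧ T ++ R = [x] :=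
    (List.append_eq_singleton_iff.1 h.symm).resolve_right fun h' =>
      hT.ne_nil (List.append_eq_nil_iff.1 h'.2).1
  exact ⟨rfl, (List.append_eq_singleton_iff.1 hTR).resolve_left fun h' => hT.ne_nil h'.1⟩

theorem eq_or_inside_of_bracket (hX : WellBracketed X) (hT : WellBracketed T)
    (h : .op i :: (X ++ [.cl i]) = L ++ (T ++ R)) :
    (L = [] ∧ T = .op i :: (X ++ [.cl i]) ∧ R = []) ∨
      ∃ L' R', L = .op i :: L' ∧ X = L' ++ (T ++ R') ∧ R = R' ++ [.cl i] := by
  rcases List.cons_eq_append_iff.1 h with ⟨rfl, hTR⟩ | ⟨L', rfl, hX'⟩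
  · refine .inl ⟨rfl, ?_⟩
    rcases R.eq_nil_or_concat' with rfl | ⟨R', z, rfl⟩
    · exact ⟨by simpa using hTR, rfl⟩
    obtain ⟨T', rfl, hX'⟩ := (List.append_eq_cons_iff.1 hTR).resolve_left fun h' => hT.ne_nil h'.1
    obtain ⟨rfl, rfl⟩ : X = T' ++ R' ∧ Token.cl i = z := by
      simpa only [← List.append_assoc, List.append_singleton_inj] using hX'
    obtain ⟨⟨b, s⟩, hT', -⟩ := runs_append.1 hX
    have := (hT'.append_stack [i]).unique hT
    simp at this
  · refine .inr ⟨L', ?_⟩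
    rcases R.eq_nil_or_concat' with rfl | ⟨R', z, rfl⟩
    · obtain ⟨T', rfl, rfl⟩ := exists_of_append_singleton_eq_append (by simpa using hX') hT.ne_nil
      obtain ⟨p, -, hp⟩ := runs_append.1 hX
      obtain ⟨q, hq, hqi⟩ := runs_append.1 (hT.runs p.1 p.2)
      obtain rfl := hp.unique hq
      simp [Runs] at hqi
    · obtain ⟨rfl, rfl⟩ : X = L' ++ (T ++ R') ∧ Token.cl i = z := by
        simpa only [← List.append_assoc, List.append_singleton_inj] using hX'
      exact ⟨R', rfl, rfl, rfl⟩

theorem map_ty {As : List τ} (h : As ≠ []) :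
    WellBracketed (As.map .ty : List (Token ι τ)) := by
  induction As with
  | nil => exact absurd rfl h
  | cons A As ih =>
    refine .leaf_append A ?_
    rcases eq_or_ne As [] with rfl | hAs
    exacts [.inl rfl, .inr (ih hAs)]

end WellBracketed

theorem Runs.exists_bracket (h : Runs (b, s) X (true, [])) :
    (s = [] ∧ ∃ As : List τ, X = As.map .ty) ∨
      (∃ L i T R, WellBracketed T ∧ X = L ++ .op i :: (T ++ .cl i :: R)) ∨
      ∃ T i R, X = T ++ .cl i :: R ∧ s.head? = some i ∧ (T = [] ∧ b = true ∨ WellBracketed T) := by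
  induction X generalizing b s with
  | nil => exact .inl ⟨(Prod.mk.inj h).2, [], rfl⟩
  | cons x X ih =>
    cases x with
    | ty A =>
      rcases ih h with ⟨hs, As, rfl⟩ | ⟨L, i, T, R, hT, rfl⟩ | ⟨T, i, R, rfl, hs, hT⟩
      · exact .inl ⟨hs, A :: As, rfl⟩
      · exact .inr (.inl ⟨.ty A :: L, i, T, R, hT, rfl⟩)
      · exact .inr (.inr ⟨.ty A :: T, i, R, rfl, hs, .inr (.leaf_append A (hT.imp_left And.left))⟩)
    | op j =>
      rcases ih (s := j :: s) h with ⟨hs, -⟩ | ⟨L, i, T, R, hT, rfl⟩ | ⟨T, i, R, rfl, hs, hT⟩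
      · cases hs
      · exact .inr (.inl ⟨.op j :: L, i, T, R, hT, rfl⟩)
      · obtain rfl : j = i := Option.some.inj hs
        exact .inr (.inl ⟨[], j, T, R, by simpa using hT, rfl⟩)
    | cl j =>
      obtain ⟨s', rfl, rfl, -⟩ := h
      exact .inr (.inr ⟨[], j, X, rfl, rfl, .inl ⟨rfl, rfl⟩⟩)

theorem WellBracketed.eq_map_ty_or_exists_bracket (h : WellBracketed X) :
    (∃ As : List τ, X = As.map .ty) ∨
      ∃ L i T R, WellBracketed T ∧ X = L ++ .op i :: (T ++ .cl i :: R) := by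
  rcases Runs.exists_bracket h with ⟨-, h⟩ | h | ⟨_, _, _, _, hs, _⟩
  exacts [.inl h, .inr h, by simp at hs]

end Runs

/-! ### The labelled calculus -/

/-- Types of the bracketed calculus whose primitive types and pairs of brackets carry labels in
`α`. -/
inductive LType (α : Type*) where
  | prim : α → LType α
  | ldiv : LType α → LType α → LType α
  | rdiv : LType α → LType α → LType α
  | mul : LType α → LType α → LType α
  | dia : α → LType α → LType α
  | box : α → LType α → LType α

/-- Relabelling of a type. -/
def LType.map {α β : Type*} (φ : α → β) : LType α → LType β
  | prim a => prim (φ a)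
  | ldiv A B => ldiv (A.map φ) (B.map φ)
  | rdiv B A => rdiv (B.map φ) (A.map φ)
  | mul A B => mul (A.map φ) (B.map φ)
  | dia a A => dia (φ a) (A.map φ)
  | box a A => box (φ a) (A.map φ)

theorem LType.map_map {α β γ : Type*} (φ : α → β) (ψ : β → γ) (A : LType α) :
    (A.map φ).map ψ = A.map (ψ ∘ φ) := by
  induction A <;> simp_all only [LType.map, Function.comp_apply]

/-- A linearised hedge of labelled types. -/
abbrev LSeq (α : Type*) := List (Token α (LType α))

/-- Relabelling of a linearised hedge. -/
abbrev LSeq.map {α β : Type*} (φ : α → β) (X : LSeq α) : LSeq β :=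
  List.map (Token.map φ (LType.map φ)) X

/-- Cut-free derivability of labelled sequents with linearised antecedents. -/
inductive CutFree {α : Type*} : LSeq α → LType α → Prop where
  | id (a : α) : CutFree [.ty (.prim a)] (.prim a)
  | ldivL (G L R : LSeq α) (A B C : LType α) : CutFree G A → CutFree (L ++ .ty B :: R) C →
      CutFree (L ++ (G ++ .ty (.ldiv A B) :: R)) C
  | ldivR (X : LSeq α) (A B : LType α) : X ≠ [] → CutFree (.ty A :: X) B → CutFree X (.ldiv A B)
  | rdivL (G L R : LSeq α) (A B C : LType α) : CutFree G A → CutFree (L ++ .ty B :: R) C →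
      CutFree (L ++ .ty (.rdiv B A) :: (G ++ R)) C
  | rdivR (X : LSeq α) (A B : LType α) : X ≠ [] → CutFree (X ++ [.ty A]) B → CutFree X (.rdiv B A)
  | mulL (L R : LSeq α) (A B C : LType α) : CutFree (L ++ .ty A :: .ty B :: R) C →
      CutFree (L ++ .ty (.mul A B) :: R) C
  | mulR (G D : LSeq α) (A B : LType α) : CutFree G A → CutFree D B → CutFree (G ++ D) (.mul A B)
  | diaL (i : α) (L R : LSeq α) (A C : LType α) : CutFree (L ++ .op i :: .ty A :: .cl i :: R) C →
      CutFree (L ++ .ty (.dia i A) :: R) C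
  | diaR (i : α) (G : LSeq α) (A : LType α) : CutFree G A →
      CutFree (.op i :: (G ++ [.cl i])) (.dia i A)
  | boxL (i : α) (L R : LSeq α) (A C : LType α) : CutFree (L ++ .ty A :: R) C →
      CutFree (L ++ .op i :: .ty (.box i A) :: .cl i :: R) C
  | boxR (i : α) (G : LSeq α) (A : LType α) : WellBracketed G →
      CutFree (.op i :: (G ++ [.cl i])) A → CutFree G (.box i A)

theorem wellBracketed_bracketed_ty {ι τ : Type*} (i : ι) (a : τ) :
    WellBracketed [.op i, .ty a, .cl i] :=
  (WellBracketed.singleton_ty a).bracket i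

theorem CutFree.wellBracketed {α : Type*} {X : LSeq α} {C : LType α} (h : CutFree X C) :
    WellBracketed X := by
  have leaf (A : LType α) : WellBracketed ([.ty A] : LSeq α) := .singleton_ty A
  induction h with
  | id => exact leaf _
  | ldivL G L R A B _ _ _ ihG ih =>
    simpa using WellBracketed.replace (T := [.ty B]) ih (leaf _) (ihG.append (leaf (.ldiv A B)))
  | ldivR _ _ _ hX _ ih => exact Runs.false_of_empty_stack ih hX
  | rdivL G L R A B _ _ _ ihG ih =>
    simpa using WellBracketed.replace (T := [.ty B]) ih (leaf _) ((leaf (.rdiv B A)).append ihG)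
  | rdivR _ A _ hX _ ih =>
    simpa [hX] using (ih.nil_or_of_overlap (S := []) (by simpa using leaf A)).1
  | mulL L R A B _ _ ih =>
    exact WellBracketed.replace (T := [.ty A, .ty B]) ih ((leaf A).append (leaf B)) (leaf _)
  | mulR _ _ _ _ _ _ ihG ihD => exact ihG.append ihD
  | diaL i L R A _ _ ih =>
    exact WellBracketed.replace (T := [.op i, .ty A, .cl i]) ih
      (wellBracketed_bracketed_ty i A) (leaf _)
  | diaR i _ _ _ ih => exact ih.bracket i
  | boxL i L R A _ _ ih =>
    exact WellBracketed.replace (T' := [.op i, .ty (.box i A), .cl i]) ih (leaf _)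
      (wellBracketed_bracketed_ty i _)
  | boxR _ _ _ hG _ _ => exact hG

/-! ### Letter counts and interpolation -/

/-- Generators of the free group interpreting labelled types: primitive types, opening brackets
and closing brackets. -/
inductive Letter (α : Type*) where
  | prim : α → Letter α
  | op : α → Letter α
  | cl : α → Letter α
deriving DecidableEq

/-- Relabelling of letters. -/
def Letter.map {α β : Type*} (φ : α → β) : Letter α → Letter β
  | prim a => prim (φ a)
  | op a => op (φ a)
  | cl a => cl (φ a)

theorem Letter.map_injective {α β : Type*} {φ : α → β} (hφ : φ.Injective) :
    (Letter.map φ).Injective := by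
  rintro (a | a | a) (b | b | b) h <;> simp_all [Letter.map, hφ.eq_iff]

section Word

variable {α : Type*}

/-- The signed word of a type in the free group, without cancellation: divisions invert their
denominators and `□` cancels a surrounding pair of brackets. -/
def LType.word : LType α → List (Letter α × Bool)
  | prim a => [(.prim a, true)]
  | ldiv A B => FreeGroup.invRev A.word ++ B.word
  | rdiv B A => B.word ++ FreeGroup.invRev A.word
  | mul A B => A.word ++ B.word
  | dia i A => (.op i, true) :: (A.word ++ [(.cl i, true)])
  | box i A => (.op i, false) :: (A.word ++ [(.cl i, false)])

/-- The signed word of a token. -/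
def Token.word : Token α (LType α) → List (Letter α × Bool)
  | ty A => A.word
  | op i => [(.op i, true)]
  | cl i => [(.cl i, true)]

/-- The signed word of a linearised hedge. -/
def LSeq.word (X : LSeq α) : List (Letter α × Bool) := X.flatMap Token.word

variable [DecidableEq α]

/-- The number of occurrences of a letter in a type, of either sign. -/
def LType.occ (A : LType α) (g : Letter α) : ℕ := (A.word.map Prod.fst).count g

/-- The number of occurrences of a letter in a linearised hedge, of either sign. -/
def LSeq.occ (X : LSeq α) (g : Letter α) : ℕ := ((LSeq.word X).map Prod.fst).count g

variable (g : Letter α) (a i : α) (A B : LType α) (X Y : LSeq α)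

theorem count_map_fst_invRev (w : List (Letter α × Bool)) :
    ((FreeGroup.invRev w).map Prod.fst).count g = (w.map Prod.fst).count g := by
  simp [FreeGroup.invRev, Function.comp_def]

theorem LType.occ_prim : (prim a).occ g = [Letter.prim a].count g := rfl

theorem LType.occ_ldiv : (ldiv A B).occ g = A.occ g + B.occ g := by
  simp only [occ, word, List.map_append, List.count_append, count_map_fst_invRev]

theorem LType.occ_rdiv : (rdiv B A).occ g = B.occ g + A.occ g := by
  simp only [occ, word, List.map_append, List.count_append, count_map_fst_invRev]

theorem LType.occ_mul : (mul A B).occ g = A.occ g + B.occ g := by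
  simp only [occ, word, List.map_append, List.count_append]

theorem LType.occ_dia :
    (dia i A).occ g = [Letter.op i].count g + A.occ g + [Letter.cl i].count g := by
  simp only [occ, word, List.map_cons, List.map_append, List.map_nil,
    List.count_cons, List.count_append, List.count_nil]
  omega

theorem LType.occ_box :
    (box i A).occ g = [Letter.op i].count g + A.occ g + [Letter.cl i].count g := by
  simp only [occ, word, List.map_cons, List.map_append, List.map_nil,
    List.count_cons, List.count_append, List.count_nil]
  omega

theorem LSeq.occ_nil : LSeq.occ ([] : LSeq α) g = 0 := rfl

theorem LSeq.occ_append : LSeq.occ (X ++ Y) g = LSeq.occ X g + LSeq.occ Y g := by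
  simp only [occ, word, List.flatMap_append, List.map_append, List.count_append]

theorem LSeq.occ_cons_ty : LSeq.occ (.ty A :: X) g = A.occ g + LSeq.occ X g := by
  simp only [occ, word, LType.occ, Token.word, List.flatMap_cons, List.map_append,
    List.count_append]

theorem LSeq.occ_cons_op : LSeq.occ (.op i :: X) g = [Letter.op i].count g + LSeq.occ X g := by
  simp only [occ, word, Token.word, List.flatMap_cons, List.map_append, List.count_append,
    List.map_cons, List.map_nil]

theorem LSeq.occ_cons_cl : LSeq.occ (.cl i :: X) g = [Letter.cl i].count g + LSeq.occ X g := by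
  simp only [occ, word, Token.word, List.flatMap_cons, List.map_append, List.count_append,
    List.map_cons, List.map_nil]

end Word

section Interpolation

variable {α : Type*} [DecidableEq α]

/-- An interpolant of the part `T` of the antecedent `L, T, R` of a sequent with succedent `C`. -/
def HasInterpolant (L T R : LSeq α) (C : LType α) : Prop :=
  ∃ E : LType α, CutFree T E ∧ CutFree (L ++ .ty E :: R) C ∧
    ∀ g, E.occ g ≤ LSeq.occ T g ∧ E.occ g ≤ LSeq.occ L g + LSeq.occ R g + C.occ g

/-- Every well-bracketed part of the antecedent has an interpolant. -/
def Interpolable (X : LSeq α) (C : LType α) : Prop :=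
  ∀ L T R : LSeq α, X = L ++ (T ++ R) → WellBracketed T → HasInterpolant L T R C

variable {G K K₁ K₂ L L' M R R' T T' X D : LSeq α} {A B C C' : LType α} {i : α}

theorem HasInterpolant.mono (h : HasInterpolant L T R C)
    (hT : ∀ E, CutFree T E → CutFree T' E)
    (hC : ∀ E, CutFree (L ++ .ty E :: R) C → CutFree (L' ++ .ty E :: R') C')
    (hoccT : ∀ g, LSeq.occ T g ≤ LSeq.occ T' g)
    (hoccC : ∀ g, LSeq.occ L g + LSeq.occ R g + C.occ g ≤
      LSeq.occ L' g + LSeq.occ R' g + C'.occ g) :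
    HasInterpolant L' T' R' C' := by
  obtain ⟨E, hE, hEC, hocc⟩ := h
  exact ⟨E, hT E hE, hC E hEC, fun g =>
    ⟨(hocc g).1.trans (hoccT g), (hocc g).2.trans (hoccC g)⟩⟩

theorem Interpolable.cover_block {T₁ T₂ : LSeq α}
    (rule : ∀ L R C, CutFree (L ++ (M ++ R)) C → CutFree (L ++ (K ++ R)) C)
    (hocc : ∀ g, LSeq.occ M g ≤ LSeq.occ K g)
    (hK : WellBracketed K) (hM : WellBracketed M)
    (h : Interpolable (L ++ T₁ ++ (M ++ (T₂ ++ R))) C) (hT : WellBracketed (T₁ ++ (K ++ T₂))) :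
    HasInterpolant L (T₁ ++ (K ++ T₂)) R C := by
  refine (h L (T₁ ++ (M ++ T₂)) R (by simp) (hT.replace hK hM)).mono
    (rule _ _) (fun _ h => h) (fun g => ?_) (fun _ => le_rfl)
  simp only [LSeq.occ_append]
  gcongr
  exact hocc g

theorem Interpolable.right_of_block
    (rule : ∀ L R C, CutFree (L ++ (M ++ R)) C → CutFree (L ++ (K ++ R)) C)
    (hocc : ∀ g, LSeq.occ M g ≤ LSeq.occ K g)
    (h : Interpolable (L ++ (M ++ (R' ++ (T ++ R)))) C)
    (hT : WellBracketed T) : HasInterpolant (L ++ (K ++ R')) T R C := by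
  refine (h (L ++ (M ++ R')) T R (by simp) hT).mono (fun _ h => h)
    (fun E h => by simpa using rule L (R' ++ .ty E :: R) C (by simpa using h))
    (fun _ => le_rfl) (fun g => ?_)
  simp only [LSeq.occ_append]
  gcongr
  exact hocc g

theorem Interpolable.left_of_block
    (rule : ∀ L R C, CutFree (L ++ (M ++ R)) C → CutFree (L ++ (K ++ R)) C)
    (hocc : ∀ g, LSeq.occ M g ≤ LSeq.occ K g)
    (h : Interpolable (L ++ (T ++ L') ++ (M ++ R)) C)
    (hT : WellBracketed T) : HasInterpolant L T (L' ++ (K ++ R)) C := by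
  refine (h L T (L' ++ (M ++ R)) (by simp) hT).mono (fun _ h => h)
    (fun E h => by simpa using rule (L ++ .ty E :: L') R C (by simpa using h))
    (fun _ => le_rfl) (fun g => ?_)
  simp only [LSeq.occ_append]
  gcongr
  exact hocc g

/-- Interpolation for a left rule which turns a block `M` of the antecedent into `K`. The cases in
which `T` properly overlaps `K`, or is properly contained in it, are left as hypotheses. -/
theorem Interpolable.of_block
    (rule : ∀ L R C, CutFree (L ++ (M ++ R)) C → CutFree (L ++ (K ++ R)) C)
    (hocc : ∀ g, LSeq.occ M g ≤ LSeq.occ K g)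
    (hK : WellBracketed K) (hM : WellBracketed M)
    (h : Interpolable (L ++ (M ++ R)) C)
    (suffix : ∀ K₁ K₂ T₂ R', K = K₁ ++ K₂ → R = T₂ ++ R' → WellBracketed K₁ → WellBracketed K₂ →
      (T₂ = [] ∨ WellBracketed T₂) → HasInterpolant (L ++ K₁) (K₂ ++ T₂) R' C)
    (pref : ∀ L' T₁ K₁ K₂, L = L' ++ T₁ → K = K₁ ++ K₂ → WellBracketed K₁ → WellBracketed K₂ →
      (T₁ = [] ∨ WellBracketed T₁) → HasInterpolant L' (T₁ ++ K₁) (K₂ ++ R) C)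
    (inside : ∀ K₁ T K₂, K = K₁ ++ (T ++ K₂) → K₁ ≠ [] → K₂ ≠ [] → WellBracketed T →
      HasInterpolant (L ++ K₁) T (K₂ ++ R) C) :
    Interpolable (L ++ (K ++ R)) C := by
  have suffix' (K₁ K₂ T₂ R') (hK' : K = K₁ ++ K₂) (hR : R = T₂ ++ R')
      (hT : WellBracketed (K₂ ++ T₂)) : HasInterpolant (L ++ K₁) (K₂ ++ T₂) R' C := by
    obtain ⟨hK₁ | hK₁, hK₂ | hK₂, hT₂⟩ := (hK' ▸ hK).nil_or_of_overlap hT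
    · exact absurd (by simp [hK', hK₁, hK₂]) hK.ne_nil
    · subst hK₁ hK' hR
      simpa using Interpolable.cover_block rule hocc (T₁ := []) hK hM (by simpa using h)
        (by simpa using hT)
    · subst hK₂ hK' hR
      simpa using h.right_of_block rule hocc (R' := []) (by simpa using hT)
    · exact suffix K₁ K₂ T₂ R' hK' hR hK₁ hK₂ hT₂
  have pref' (L' T₁ K₁ K₂) (hL : L = L' ++ T₁) (hK' : K = K₁ ++ K₂)
      (hT : WellBracketed (T₁ ++ K₁)) : HasInterpolant L' (T₁ ++ K₁) (K₂ ++ R) C := by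
    obtain ⟨hT₁, hK₁ | hK₁, hK₂ | hK₂⟩ := hT.nil_or_of_overlap (hK' ▸ hK)
    · exact absurd (by simp [hK', hK₁, hK₂]) hK.ne_nil
    · subst hK₁ hK' hL
      simpa using Interpolable.left_of_block rule hocc (L' := []) (by simpa using h)
        (by simpa using hT)
    · subst hK₂ hK' hL
      simpa using h.cover_block rule hocc (T₂ := []) hK hM (by simpa using hT)
    · exact pref L' T₁ K₁ K₂ hL hK' hK₁ hK₂ hT₁
  intro L' T R' hX hT
  rcases List.append_eq_append_iff.1 hX with ⟨K₁, rfl, hKR⟩ | ⟨T₁, rfl, hTR⟩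
  · rcases List.append_eq_append_iff.1 hKR with ⟨L₂, rfl, rfl⟩ | ⟨S, hK', hTR⟩
    · exact h.right_of_block rule hocc hT
    rcases List.append_eq_append_iff.1 hTR with ⟨K₂, rfl, rfl⟩ | ⟨T₂, rfl, hR⟩
    · rcases eq_or_ne K₁ [] with rfl | hK₁
      · simpa using pref' L [] T K₂ (by simp) hK' hT
      rcases eq_or_ne K₂ [] with rfl | hK₂
      · simpa using suffix' K₁ T [] R (by simpa using hK') rfl (by simpa using hT)
      exact inside K₁ T K₂ hK' hK₁ hK₂ hT
    · exact suffix' K₁ S T₂ R' hK' hR hT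
  · rcases List.append_eq_append_iff.1 hTR with ⟨R₁, rfl, rfl⟩ | ⟨S, rfl, hKR⟩
    · exact h.left_of_block rule hocc hT
    rcases List.append_eq_append_iff.1 hKR with ⟨T₂, rfl, rfl⟩ | ⟨K₂, hK', rfl⟩
    · exact h.cover_block rule hocc hK hM hT
    · exact pref' L' T₁ S K₂ rfl hK' hT

theorem Interpolable.of_leaf
    (rule : ∀ L R C, CutFree (L ++ (M ++ R)) C → CutFree (L ++ .ty A :: R) C)
    (hM : WellBracketed M) (hocc : ∀ g, LSeq.occ M g ≤ A.occ g)
    (h : Interpolable (L ++ (M ++ R)) C) : Interpolable (L ++ .ty A :: R) C := by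
  have irreducible (K₁ K₂ : LSeq α) (hK : [.ty A] = K₁ ++ K₂) (h₁ : K₁ ≠ []) : K₂ = [] := by
    obtain ⟨h, -⟩ | ⟨-, h⟩ := List.append_eq_singleton_iff.1 hK.symm
    exacts [absurd h h₁, h]
  refine Interpolable.of_block (K := [.ty A]) rule (fun g => ?_) (.singleton_ty A) hM h ?_ ?_ ?_
  · simpa only [LSeq.occ_cons_ty, LSeq.occ_nil, add_zero] using hocc g
  · exact fun K₁ K₂ _ _ hK _ h₁ h₂ _ => absurd (irreducible K₁ K₂ hK h₁.ne_nil) h₂.ne_nil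
  · exact fun _ _ K₁ K₂ _ hK h₁ h₂ _ => absurd (irreducible K₁ K₂ hK h₁.ne_nil) h₂.ne_nil
  · intro K₁ T K₂ hK h₁ h₂ _
    exact absurd (List.append_eq_nil_iff.1 (irreducible K₁ (T ++ K₂) hK h₁)).2 h₂

theorem Interpolable.ldivL_suffix {S T₂ : LSeq α} (ihG : Interpolable G A)
    (hGS : G = K₁ ++ S) (hK₁ : WellBracketed K₁)
    (ih : HasInterpolant L (.ty B :: T₂) R C) :
    HasInterpolant (L ++ K₁) (S ++ .ty (.ldiv A B) :: T₂) R C := by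
  obtain ⟨E, hE, hEA, hEocc⟩ := ihG [] K₁ S hGS hK₁
  obtain ⟨F, hF, hFC, hFocc⟩ := ih
  refine ⟨.ldiv E F, .ldivR _ _ _ (by simp) ?_, ?_, fun g => ?_⟩
  · simpa using CutFree.ldivL (.ty E :: S) [] T₂ A B F hEA hF
  · simpa using CutFree.ldivL K₁ L R E F C hE hFC
  · have hE := hEocc g
    have hF := hFocc g
    simp only [LSeq.occ_append, LSeq.occ_cons_ty, LSeq.occ_nil, LType.occ_ldiv] at *
    omega

theorem Interpolable.ldivL_inside {S : LSeq α} (ihG : Interpolable G A)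
    (hGS : G = K₁ ++ (T ++ S)) (hT : WellBracketed T)
    (h : CutFree (L ++ .ty B :: R) C) :
    HasInterpolant (L ++ K₁) T (S ++ .ty (.ldiv A B) :: R) C := by
  obtain ⟨E, hE, hEA, hEocc⟩ := ihG K₁ T S hGS hT
  refine ⟨E, hE, ?_, fun g => ⟨(hEocc g).1, ?_⟩⟩
  · simpa using CutFree.ldivL (K₁ ++ .ty E :: S) L R A B C hEA h
  · have hE := hEocc g
    simp only [LSeq.occ_append, LSeq.occ_cons_ty, LType.occ_ldiv] at *
    omega

theorem Interpolable.ldivL_prefix {S T₁ : LSeq α} (ihG : Interpolable G A)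
    (hGS : G = K₁ ++ S) (hK₁ : WellBracketed K₁)
    (h : HasInterpolant L T₁ (.ty B :: R) C) :
    HasInterpolant L (T₁ ++ K₁) (S ++ .ty (.ldiv A B) :: R) C := by
  obtain ⟨E, hE, hEA, hEocc⟩ := ihG [] K₁ S hGS hK₁
  obtain ⟨F, hF, hFC, hFocc⟩ := h
  refine ⟨.mul F E, .mulR _ _ _ _ hF hE, .mulL _ _ _ _ _ ?_, fun g => ?_⟩
  · rw [List.append_cons] at hFC ⊢
    exact CutFree.ldivL (.ty E :: S) (L ++ [.ty F]) R A B C hEA hFC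
  · have hE := hEocc g
    have hF := hFocc g
    simp only [LSeq.occ_append, LSeq.occ_cons_ty, LSeq.occ_nil, LType.occ_ldiv,
      LType.occ_mul] at *
    omega

theorem Interpolable.ldivL (ihG : Interpolable G A) (hG : CutFree G A)
    (h : CutFree (L ++ .ty B :: R) C)
    (ih : Interpolable (L ++ .ty B :: R) C) :
    Interpolable (L ++ (G ++ .ty (.ldiv A B) :: R)) C := by
  have rule (L R C) (h : CutFree (L ++ ([.ty B] ++ R)) C) :
      CutFree (L ++ (G ++ [.ty (.ldiv A B)] ++ R)) C := by
    simpa using CutFree.ldivL G L R A B C hG h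
  have hocc (g) : LSeq.occ [.ty B] g ≤ LSeq.occ (G ++ [.ty (.ldiv A B)]) g := by
    simp only [LSeq.occ_append, LSeq.occ_cons_ty, LSeq.occ_nil, LType.occ_ldiv]; omega
  rw [List.append_cons G]
  refine Interpolable.of_block rule hocc (hG.wellBracketed.append (.singleton_ty _))
    (.singleton_ty B) ih ?_ ?_ ?_
  · intro K₁ K₂ T₂ R' hK hR h₁ h₂ hT₂
    obtain ⟨S, rfl, hGS⟩ := exists_of_append_singleton_eq_append hK h₂.ne_nil
    simpa using ldivL_suffix ihG hGS h₁ (ih L (.ty B :: T₂) R' (by simp [hR]) (.leaf_append B hT₂))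
  · intro L' T₁ K₁ K₂ hL hK h₁ h₂ hT₁
    obtain ⟨S, rfl, hGS⟩ := exists_of_append_singleton_eq_append hK h₂.ne_nil
    rcases hT₁ with rfl | hT₁
    · simpa [hL] using ldivL_inside (K₁ := []) (T := K₁) ihG (by simpa using hGS) h₁ h
    · simpa using ldivL_prefix ihG hGS h₁ (ih L' T₁ (.ty B :: R) (by simp [hL]) hT₁)
  · intro K₁ T K₂ hK _ h₂ hT
    obtain ⟨S, rfl, hGS⟩ := exists_of_append_singleton_eq_append
      (K₁ := K₁ ++ T) (K₂ := K₂) (by simpa using hK) h₂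
    simpa using ldivL_inside ihG (by simpa using hGS) hT h

theorem Interpolable.rdivL_prefix {S T₁ : LSeq α} (ihG : Interpolable G A)
    (hGS : G = S ++ K₂) (hK₂ : WellBracketed K₂)
    (ih : HasInterpolant L (T₁ ++ [.ty B]) R C) :
    HasInterpolant L (T₁ ++ .ty (.rdiv B A) :: S) (K₂ ++ R) C := by
  obtain ⟨E, hE, hEA, hEocc⟩ := ihG S K₂ [] (by simpa using hGS) hK₂
  obtain ⟨F, hF, hFC, hFocc⟩ := ih
  refine ⟨.rdiv F E, .rdivR _ _ _ (by simp) ?_, ?_, fun g => ?_⟩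
  · simpa using CutFree.rdivL (S ++ [.ty E]) T₁ [] A B F hEA hF
  · simpa using CutFree.rdivL K₂ L R E F C hE hFC
  · have hE := hEocc g
    have hF := hFocc g
    simp only [LSeq.occ_append, LSeq.occ_cons_ty, LSeq.occ_nil, LType.occ_rdiv] at *
    omega

theorem Interpolable.rdivL_inside {S : LSeq α} (ihG : Interpolable G A)
    (hGS : G = S ++ (T ++ K₂)) (hT : WellBracketed T)
    (h : CutFree (L ++ .ty B :: R) C) :
    HasInterpolant (L ++ .ty (.rdiv B A) :: S) T (K₂ ++ R) C := by
  obtain ⟨E, hE, hEA, hEocc⟩ := ihG S T K₂ hGS hT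
  refine ⟨E, hE, ?_, fun g => ⟨(hEocc g).1, ?_⟩⟩
  · simpa using CutFree.rdivL (S ++ .ty E :: K₂) L R A B C hEA h
  · have hE := hEocc g
    simp only [LSeq.occ_append, LSeq.occ_cons_ty, LType.occ_rdiv] at *
    omega

theorem Interpolable.rdivL_suffix {S T₂ : LSeq α} (ihG : Interpolable G A)
    (hGS : G = S ++ K₂) (hK₂ : WellBracketed K₂)
    (h : HasInterpolant (L ++ [.ty B]) T₂ R C) :
    HasInterpolant (L ++ .ty (.rdiv B A) :: S) (K₂ ++ T₂) R C := by
  obtain ⟨E, hE, hEA, hEocc⟩ := ihG S K₂ [] (by simpa using hGS) hK₂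
  obtain ⟨F, hF, hFC, hFocc⟩ := h
  refine ⟨.mul E F, .mulR _ _ _ _ hE hF, .mulL _ _ _ _ _ ?_, fun g => ?_⟩
  · have := CutFree.rdivL (S ++ [.ty E]) L (.ty F :: R) A B C hEA (by simpa using hFC)
    rw [List.append_assoc] at this ⊢
    exact this
  · have hE := hEocc g
    have hF := hFocc g
    simp only [LSeq.occ_append, LSeq.occ_cons_ty, LSeq.occ_nil, LType.occ_rdiv,
      LType.occ_mul] at *
    omega

theorem Interpolable.rdivL (ihG : Interpolable G A) (hG : CutFree G A)
    (h : CutFree (L ++ .ty B :: R) C)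
    (ih : Interpolable (L ++ .ty B :: R) C) :
    Interpolable (L ++ .ty (.rdiv B A) :: (G ++ R)) C := by
  have rule (L R C) (h : CutFree (L ++ ([.ty B] ++ R)) C) :
      CutFree (L ++ (.ty (.rdiv B A) :: G ++ R)) C := by
    simpa using CutFree.rdivL G L R A B C hG h
  have hocc (g) : LSeq.occ [.ty B] g ≤ LSeq.occ (.ty (.rdiv B A) :: G) g := by
    simp only [LSeq.occ_cons_ty, LSeq.occ_nil, LType.occ_rdiv]; omega
  refine Interpolable.of_block rule hocc (.leaf_append _ (.inr hG.wellBracketed))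
    (.singleton_ty B) ih ?_ ?_ ?_
  · intro K₁ K₂ T₂ R' hK hR h₁ h₂ hT₂
    obtain ⟨S, rfl, hGS⟩ := (List.cons_eq_append_iff.1 hK).resolve_left fun h => h₁.ne_nil h.1
    rcases hT₂ with rfl | hT₂
    · simpa [hR] using rdivL_inside (T := K₂) (K₂ := []) ihG (by simpa using hGS) h₂ h
    · simpa using rdivL_suffix ihG hGS h₂ (ih (L ++ [.ty B]) T₂ R' (by simp [hR]) hT₂)
  · intro L' T₁ K₁ K₂ hL hK h₁ h₂ hT₁
    obtain ⟨S, rfl, hGS⟩ := (List.cons_eq_append_iff.1 hK).resolve_left fun h => h₁.ne_nil h.1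
    simpa using rdivL_prefix ihG hGS h₂
      (ih L' (T₁ ++ [.ty B]) R (by simp [hL]) (.append_leaf B hT₁))
  · intro K₁ T K₂ hK h₁ _ hT
    obtain ⟨S, rfl, hGS⟩ := (List.cons_eq_append_iff.1 hK).resolve_left fun h => h₁ h.1
    simpa using rdivL_inside ihG hGS hT h

theorem Interpolable.boxL (ih : Interpolable (L ++ .ty A :: R) C) :
    Interpolable (L ++ .op i :: .ty (.box i A) :: .cl i :: R) C := by
  have overlap {K₁ K₂ : LSeq α} (hK : [.op i, .ty (.box i A), .cl i] = K₁ ++ K₂)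
      (h₁ : WellBracketed K₁) (h₂ : WellBracketed K₂) : False := by
    rcases WellBracketed.eq_or_inside_of_bracket (X := [.ty (.box i A)]) (L := []) (.singleton_ty _)
      h₁ hK with ⟨-, -, h⟩ | ⟨_, _, h, -⟩
    exacts [h₂.ne_nil h, List.noConfusion rfl (heq_of_eq h)]
  refine Interpolable.of_block (K := [.op i, .ty (.box i A), .cl i]) (M := [.ty A])
    (fun L R C => CutFree.boxL i L R A C) (fun g => ?_) (wellBracketed_bracketed_ty i _)
    (.singleton_ty A) ih ?_ ?_ ?_
  · simp only [LSeq.occ_cons_ty, LSeq.occ_cons_op, LSeq.occ_cons_cl, LSeq.occ_nil, LType.occ_box]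
    omega
  · exact fun K₁ K₂ _ _ hK _ h₁ h₂ _ => (overlap hK h₁ h₂).elim
  · exact fun _ _ K₁ K₂ _ hK h₁ h₂ _ => (overlap hK h₁ h₂).elim
  · intro K₁ T K₂ hK h₁ h₂ hT
    obtain ⟨hK₁, -, -⟩ | ⟨L', R', rfl, hL', rfl⟩ :=
      WellBracketed.eq_or_inside_of_bracket (.singleton_ty (.box i A)) hT hK
    · exact absurd hK₁ h₁
    obtain ⟨rfl, rfl, rfl⟩ := hT.eq_of_singleton_eq hL'
    obtain ⟨E, hE, hEC, hocc⟩ := ih L [.ty A] R rfl (.singleton_ty A)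
    refine ⟨.box i E, .boxR i _ _ (.singleton_ty _) ?_, ?_, fun g => ?_⟩
    · simpa using CutFree.boxL i [] [] A E hE
    · simpa using CutFree.boxL i L R E C hEC
    · have := hocc g
      simp only [LSeq.occ_append, LSeq.occ_cons_ty, LSeq.occ_cons_op, LSeq.occ_cons_cl,
        LSeq.occ_nil, List.nil_append, LType.occ_box] at *
      omega

theorem Interpolable.mulL (h : Interpolable (L ++ .ty A :: .ty B :: R) C) :
    Interpolable (L ++ .ty (.mul A B) :: R) C := by
  refine Interpolable.of_leaf (M := [.ty A, .ty B]) (fun L R C => CutFree.mulL L R A B C)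
    (.leaf_append A (.inr (.singleton_ty B))) (fun g => ?_) h
  simp only [LSeq.occ_cons_ty, LSeq.occ_nil, LType.occ_mul, add_zero, le_refl]

theorem Interpolable.diaL (h : Interpolable (L ++ .op i :: .ty A :: .cl i :: R) C) :
    Interpolable (L ++ .ty (.dia i A) :: R) C := by
  refine Interpolable.of_leaf (M := [.op i, .ty A, .cl i]) (fun L R C => CutFree.diaL i L R A C)
    (wellBracketed_bracketed_ty i A) (fun g => ?_) h
  simp only [LSeq.occ_cons_ty, LSeq.occ_cons_op, LSeq.occ_cons_cl, LSeq.occ_nil, LType.occ_dia]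
  omega

theorem Interpolable.ldivR (h : Interpolable (.ty A :: X) B) :
    Interpolable X (.ldiv A B) := by
  rintro L T R rfl hT
  refine (h (.ty A :: L) T R rfl hT).mono (fun _ h => h)
    (fun E h => .ldivR _ _ _ (by simp) (by simpa using h)) (fun _ => le_rfl) (fun g => ?_)
  simp only [LSeq.occ_cons_ty, LType.occ_ldiv]
  omega

theorem Interpolable.rdivR (h : Interpolable (X ++ [.ty A]) B) :
    Interpolable X (.rdiv B A) := by
  rintro L T R rfl hT
  refine (h L T (R ++ [.ty A]) (by simp) hT).mono (fun _ h => h)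
    (fun E h => .rdivR _ _ _ (by simp) (by simpa using h)) (fun _ => le_rfl) (fun g => ?_)
  simp only [LSeq.occ_append, LSeq.occ_cons_ty, LSeq.occ_nil, LType.occ_rdiv]
  omega

theorem Interpolable.boxR (hX : WellBracketed X)
    (h : Interpolable (.op i :: (X ++ [.cl i])) A) :
    Interpolable X (.box i A) := by
  rintro L T R rfl hT
  refine (h (.op i :: L) T (R ++ [.cl i]) (by simp) hT).mono (fun _ h => h)
    (fun E h => .boxR i _ _ ?_ (by simpa using h)) (fun _ => le_rfl) (fun g => ?_)
  · exact hX.replace hT (.singleton_ty E)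
  · simp only [LSeq.occ_append, LSeq.occ_cons_op, LSeq.occ_cons_cl, LSeq.occ_nil, LType.occ_box]
    omega

theorem Interpolable.mulR (hG : CutFree G A) (hD : CutFree D B) (ihG : Interpolable G A)
    (ihD : Interpolable D B) : Interpolable (G ++ D) (.mul A B) := by
  have left {L T S} (h : HasInterpolant L T S A) : HasInterpolant L T (S ++ D) (.mul A B) := by
    refine h.mono (fun _ h => h) (fun E h => by simpa using CutFree.mulR _ _ _ _ h hD)
      (fun _ => le_rfl) (fun g => ?_)
    simp only [LSeq.occ_append, LType.occ_mul]; omega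
  have right {S T R} (h : HasInterpolant S T R B) : HasInterpolant (G ++ S) T R (.mul A B) := by
    refine h.mono (fun _ h => h) (fun E h => by simpa using CutFree.mulR _ _ _ _ hG h)
      (fun _ => le_rfl) (fun g => ?_)
    simp only [LSeq.occ_append, LType.occ_mul]; omega
  intro L T R hX hT
  rcases List.append_eq_append_iff.1 hX with ⟨S, rfl, hD'⟩ | ⟨S, hG', hTR⟩
  · exact right (ihD S T R hD' hT)
  rcases List.append_eq_append_iff.1 hTR with ⟨S', rfl, rfl⟩ | ⟨T₂, rfl, hD'⟩
  · exact left (ihG L T S' hG' hT)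
  obtain ⟨-, hS | hS, hT₂⟩ := (hG' ▸ hG.wellBracketed).nil_or_of_overlap hT
  · subst hS
    simpa [hG'] using right (ihD [] T₂ R hD' (by simpa using hT))
  rcases hT₂ with rfl | hT₂
  · simpa [hD'] using left (ihG L S [] (by simpa using hG') hS)
  obtain ⟨E, hE, hEA, hEocc⟩ := ihG L S [] (by simpa using hG') hS
  obtain ⟨F, hF, hFB, hFocc⟩ := ihD [] T₂ R hD' hT₂
  refine ⟨.mul E F, .mulR _ _ _ _ hE hF, .mulL _ _ _ _ _ ?_, fun g => ?_⟩
  · simpa using CutFree.mulR _ _ _ _ hEA hFB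
  · have hE := hEocc g
    have hF := hFocc g
    simp only [LSeq.occ_append, LSeq.occ_nil, LType.occ_mul] at *
    omega

theorem Interpolable.diaR (hG : CutFree G A) (ih : Interpolable G A) :
    Interpolable (.op i :: (G ++ [.cl i])) (.dia i A) := by
  intro L T R hX hT
  obtain ⟨rfl, rfl, rfl⟩ | ⟨L', R', rfl, hG', rfl⟩ := hG.wellBracketed.eq_or_inside_of_bracket hT hX
  · obtain ⟨E, hE, hEA, hocc⟩ := ih [] G [] (by simp) hG.wellBracketed
    refine ⟨.dia i E, .diaR i _ _ hE, .diaL i [] [] E _ (.diaR i _ _ hEA), fun g => ?_⟩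
    have := hocc g
    simp only [LSeq.occ_append, LSeq.occ_cons_op, LSeq.occ_cons_cl, LSeq.occ_nil,
      LType.occ_dia] at *
    omega
  · refine (ih L' T R' hG' hT).mono (fun _ h => h)
      (fun E h => by simpa using CutFree.diaR i _ _ h) (fun _ => le_rfl) (fun g => ?_)
    simp only [LSeq.occ_append, LSeq.occ_cons_op, LSeq.occ_cons_cl, LSeq.occ_nil, LType.occ_dia]
    omega

theorem CutFree.interpolable {X : LSeq α} {C : LType α} (h : CutFree X C) : Interpolable X C := by
  induction h with
  | id a =>
    intro L T R hX hT
    obtain ⟨rfl, rfl, rfl⟩ := hT.eq_of_singleton_eq hX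
    refine ⟨.prim a, .id a, .id a, fun g => ?_⟩
    simp only [LSeq.occ_cons_ty, LSeq.occ_nil]
    omega
  | ldivL G L R A B C hG h ihG ih => exact ihG.ldivL hG h ih
  | ldivR X A B _ _ ih => exact ih.ldivR
  | rdivL G L R A B C hG h ihG ih => exact ihG.rdivL hG h ih
  | rdivR X A B _ _ ih => exact ih.rdivR
  | mulL L R A B C _ ih => exact ih.mulL
  | mulR G D A B hG hD ihG ihD => exact ihG.mulR hG hD ihD
  | diaL i L R A C _ ih => exact ih.diaL
  | diaR i G A hG ih => exact ih.diaR hG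
  | boxL i L R A C _ ih => exact ih.boxL
  | boxR i G A hG _ ih => exact ih.boxR hG

end Interpolation

/-! ### Cut elimination -/

mutual
/-- The linearisation of a tree. -/
def flatTree : PTree → List (Token Unit PTy)
  | .leaf A => [.ty A]
  | .node G => .op () :: (flatHedge G ++ [.cl ()])
/-- The linearisation of a hedge; hedges are unlabelled, so brackets carry the trivial label. -/
def flatHedge : PHedge → List (Token Unit PTy)
  | [] => []
  | t :: G => flatTree t ++ flatHedge G
end

theorem flatHedge_append (G D : PHedge) : flatHedge (G ++ D) = flatHedge G ++ flatHedge D := by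
  induction G with
  | nil => rfl
  | cons t G ih => simp only [List.cons_append, flatHedge, ih, List.append_assoc]

theorem flatHedge_singleton (t : PTree) : flatHedge [t] = flatTree t :=
  List.append_nil _

theorem flatHedge_ne_nil {G : PHedge} (hG : G ≠ []) : flatHedge G ≠ [] := by
  rcases G with _ | ⟨_ | _, G⟩
  exacts [absurd rfl hG, List.cons_ne_nil _ _, List.cons_ne_nil _ _]

theorem exists_flatHedge_plug (D : PCtx) :
    ∃ L R, ∀ Z, flatHedge (D.plug Z) = L ++ (flatHedge Z ++ R) := by
  induction D with
  | hole G H =>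
    exact ⟨flatHedge G, flatHedge H, fun Z => by
      simp only [PCtx.plug, flatHedge_append, List.append_assoc]⟩
  | brk D G H ih =>
    obtain ⟨L, R, ih⟩ := ih
    refine ⟨flatHedge G ++ .op () :: L, R ++ .cl () :: flatHedge H, fun Z => ?_⟩
    simp only [PCtx.plug, flatHedge_append, flatHedge, flatTree, ih, List.append_assoc,
      List.cons_append, List.nil_append]

/-- The embedding of types into labelled types, giving every pair of brackets the label `0`. -/
def embed : PTy → LType ℕ
  | .prim p => .prim p
  | .ldiv A B => .ldiv (embed A) (embed B)
  | .rdiv B A => .rdiv (embed B) (embed A)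
  | .mul A B => .mul (embed A) (embed B)
  | .dia A => .dia 0 (embed A)
  | .box A => .box 0 (embed A)

section PhaseSemantics

/-- The closure operator of the syntactic phase semantics: the sequences which can replace all
members of `P` in every cut-free derivable sequent. -/
def closure (P : Set (LSeq ℕ)) : Set (LSeq ℕ) :=
  {x | WellBracketed x ∧
    ∀ L R C, (∀ y ∈ P, CutFree (L ++ (y ++ R)) C) → CutFree (L ++ (x ++ R)) C}

/-- The interpretation of types in the syntactic phase semantics; soundness of Cut for it yields
cut elimination. -/
def denote : PTy → Set (LSeq ℕ)
  | .prim p => {x | CutFree x (.prim p)}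
  | .ldiv A B => {x | WellBracketed x ∧ ∀ a ∈ denote A, a ++ x ∈ denote B}
  | .rdiv B A => {x | WellBracketed x ∧ ∀ a ∈ denote A, x ++ a ∈ denote B}
  | .mul A B => closure (Set.image2 (· ++ ·) (denote A) (denote B))
  | .dia A => closure ((fun a => .op 0 :: (a ++ [.cl 0])) '' denote A)
  | .box A => {x | WellBracketed x ∧ .op 0 :: (x ++ [.cl 0]) ∈ denote A}

variable {A : PTy} {L R x y z : LSeq ℕ} {P : Set (LSeq ℕ)}

theorem wellBracketed_of_mem_denote (hx : x ∈ denote A) : WellBracketed x := by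
  cases A with
  | prim p => exact CutFree.wellBracketed hx
  | _ => exact hx.1

theorem subset_closure (hP : ∀ y ∈ P, WellBracketed y) : P ⊆ closure P :=
  fun y hy => ⟨hP y hy, fun _ _ _ h => h y hy⟩

theorem plug_mem_closure {Q : Set (LSeq ℕ)} (hQ : ∀ y ∈ Q, L ++ (y ++ R) ∈ P)
    (hx : x ∈ closure Q) (hxP : WellBracketed (L ++ (x ++ R))) :
    L ++ (x ++ R) ∈ closure P := by
  refine ⟨hxP, fun L' R' C h => ?_⟩
  simpa using hx.2 (L' ++ L) (R ++ R') C fun y hy => by simpa using h _ (hQ y hy)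

theorem closure_denote_subset (A : PTy) : closure (denote A) ⊆ denote A := by
  induction A with
  | prim p =>
    intro x hx
    simpa [denote] using hx.2 [] [] (.prim p) fun y hy => by simpa [denote] using hy
  | ldiv A B _ ihB =>
    refine fun x hx => ⟨hx.1, fun a ha => ihB ?_⟩
    simpa using plug_mem_closure (L := a) (R := []) (fun y hy => by simpa using hy.2 a ha) hx
      (by simpa using (wellBracketed_of_mem_denote ha).append hx.1)
  | rdiv B A ihB _ =>
    refine fun x hx => ⟨hx.1, fun a ha => ihB ?_⟩
    exact plug_mem_closure (L := []) (fun y hy => hy.2 a ha) hx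
      (hx.1.append (wellBracketed_of_mem_denote ha))
  | mul A B | dia A => exact fun x hx => ⟨hx.1, fun L R C h => hx.2 L R C fun y hy => hy.2 L R C h⟩
  | box A ih =>
    exact fun x hx => ⟨hx.1, ih (plug_mem_closure (L := [.op 0]) (fun y hy => hy.2) hx
      (hx.1.bracket 0))⟩

theorem mem_denote_of_closure (h : ∀ y ∈ P, L ++ (y ++ R) ∈ denote A) (hz : z ∈ closure P)
    (hy : y ∈ P) (hy' : WellBracketed y) : L ++ (z ++ R) ∈ denote A :=
  closure_denote_subset A <| plug_mem_closure h hz <|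
    (wellBracketed_of_mem_denote (h y hy)).replace hy' hz.1

theorem embed_mem_denote_and_cutFree (A : PTy) :
    [.ty (embed A)] ∈ denote A ∧ ∀ x ∈ denote A, CutFree x (embed A) := by
  have leaf (A : PTy) : WellBracketed ([.ty (embed A)] : LSeq ℕ) := .singleton_ty _
  induction A with
  | prim p => exact ⟨.id p, fun x hx => hx⟩
  | ldiv A B ihA ihB =>
    refine ⟨⟨leaf _, fun a ha => closure_denote_subset B ⟨?_, fun L R C h => ?_⟩⟩,
      fun x hx => .ldivR _ _ _ hx.1.ne_nil (ihB.2 _ (hx.2 _ ihA.1))⟩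
    · exact (wellBracketed_of_mem_denote ha).append (leaf _)
    · simpa [embed] using CutFree.ldivL a L R _ _ C (ihA.2 a ha) (h _ ihB.1)
  | rdiv B A ihB ihA =>
    refine ⟨⟨leaf _, fun a ha => closure_denote_subset B ⟨?_, fun L R C h => ?_⟩⟩,
      fun x hx => .rdivR _ _ _ hx.1.ne_nil (ihB.2 _ (hx.2 _ ihA.1))⟩
    · exact (leaf _).append (wellBracketed_of_mem_denote ha)
    · exact CutFree.rdivL a L R _ _ C (ihA.2 a ha) (h _ ihB.1)
  | mul A B ihA ihB =>
    refine ⟨⟨leaf _, fun L R C h => .mulL _ _ _ _ _ (h _ ⟨_, ihA.1, _, ihB.1, rfl⟩)⟩,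
      fun x hx => ?_⟩
    simpa using hx.2 [] [] (embed (.mul A B)) <| by
      rintro _ ⟨a, ha, b, hb, rfl⟩
      simpa [embed] using CutFree.mulR _ _ _ _ (ihA.2 a ha) (ihB.2 b hb)
  | dia A ih =>
    refine ⟨⟨leaf _, fun L R C h => .diaL _ _ _ _ _ (h _ ⟨_, ih.1, rfl⟩)⟩, fun x hx => ?_⟩
    simpa using hx.2 [] [] (embed (.dia A)) <| by
      rintro _ ⟨a, ha, rfl⟩
      simpa [embed] using CutFree.diaR 0 _ _ (ih.2 a ha)
  | box A ih =>
    refine ⟨⟨leaf _, closure_denote_subset A ⟨wellBracketed_bracketed_ty 0 _, fun L R C h =>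
      .boxL _ _ _ _ _ (h _ ih.1)⟩⟩, fun x hx => .boxR _ _ _ hx.1 (ih.2 _ hx.2)⟩

/-- The instances of a linearised hedge in the phase semantics: every leaf `A` is replaced by a
member of the interpretation of `A`. -/
inductive Instance : List (Token Unit PTy) → LSeq ℕ → Prop
  | nil : Instance [] []
  | ty {A X a x} : a ∈ denote A → Instance X x → Instance (.ty A :: X) (a ++ x)
  | op {X x} : Instance X x → Instance (.op () :: X) (.op 0 :: x)
  | cl {X x} : Instance X x → Instance (.cl () :: X) (.cl 0 :: x)

namespace Instance

variable {X Y : List (Token Unit PTy)}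

theorem append_iff :
    Instance (X ++ Y) z ↔ ∃ x y, Instance X x ∧ Instance Y y ∧ z = x ++ y := by
  constructor
  · induction X generalizing z with
    | nil => exact fun h => ⟨[], z, .nil, h, rfl⟩
    | cons t X ih =>
      intro h
      cases h with
      | ty ha h => obtain ⟨x, y, hx, hy, rfl⟩ := ih h; exact ⟨_, y, hx.ty ha, hy, by simp⟩
      | op h => obtain ⟨x, y, hx, hy, rfl⟩ := ih h; exact ⟨_, y, hx.op, hy, rfl⟩
      | cl h => obtain ⟨x, y, hx, hy, rfl⟩ := ih h; exact ⟨_, y, hx.cl, hy, rfl⟩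
  · rintro ⟨x, y, hx, hy, rfl⟩
    induction hx with
    | nil => exact hy
    | ty ha _ ih => simpa using ih.ty ha
    | op _ ih => exact ih.op
    | cl _ ih => exact ih.cl

theorem leaf_iff : Instance [.ty A] x ↔ x ∈ denote A := by
  refine ⟨fun h => ?_, fun h => by simpa using nil.ty h⟩
  obtain _ | ⟨h, ⟨⟩⟩ := h
  simpa using h

theorem node_iff {G : PHedge} : Instance (flatHedge [.node G]) x ↔
    ∃ y, Instance (flatHedge G) y ∧ x = .op 0 :: (y ++ [.cl 0]) := by
  rw [flatHedge_singleton, flatTree]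
  constructor
  · rintro (_ | _ | h)
    obtain ⟨y, _, hy, _ | _ | _ | ⟨⟨⟩⟩, rfl⟩ := append_iff.1 h
    exact ⟨y, hy, rfl⟩
  · rintro ⟨y, hy, rfl⟩
    exact (append_iff.2 ⟨y, _, hy, nil.cl, rfl⟩).op

theorem plug {D : PCtx} {Z : PHedge} (h : Instance (flatHedge (D.plug Z)) x) :
    ∃ L z R, x = L ++ (z ++ R) ∧ Instance (flatHedge Z) z ∧
      ∀ Z' z', Instance (flatHedge Z') z' → Instance (flatHedge (D.plug Z')) (L ++ (z' ++ R)) := by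
  obtain ⟨X, Y, hD⟩ := exists_flatHedge_plug D
  rw [hD] at h
  obtain ⟨L, _, hL, h', rfl⟩ := append_iff.1 h
  obtain ⟨z, R, hz, hR, rfl⟩ := append_iff.1 h'
  refine ⟨L, z, R, rfl, hz, fun Z' z' hz' => ?_⟩
  rw [hD]
  exact append_iff.2 ⟨L, _, hL, append_iff.2 ⟨z', R, hz', hR, rfl⟩, rfl⟩

mutual
theorem wellBracketed_of_tree {p q : Bool × List ℕ} :
    ∀ {t : PTree} {x : LSeq ℕ}, Instance (flatTree t) x → Runs p x q → WellBracketed x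
  | .leaf _, _, h, _ => wellBracketed_of_mem_denote (leaf_iff.1 h)
  | .node G, x, h, hx => by
    obtain ⟨y, hy, rfl⟩ := node_iff.1 (by rwa [flatHedge_singleton])
    obtain ⟨r, hr, hrq⟩ := runs_append.1 hx
    rcases nil_or_wellBracketed hy hr with rfl | hy
    · obtain rfl := hr
      simp [Runs] at hrq
    · exact hy.bracket 0
theorem nil_or_wellBracketed {p q : Bool × List ℕ} :
    ∀ {G : PHedge} {x : LSeq ℕ}, Instance (flatHedge G) x → Runs p x q → x = [] ∨ WellBracketed x
  | [], _, h, _ => by cases h; exact .inl rfl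
  | t :: G, _, h, hx => by
    obtain ⟨y, z, hy, hz, rfl⟩ := append_iff.1 h
    obtain ⟨r, hr, hrq⟩ := runs_append.1 hx
    have hy := wellBracketed_of_tree hy hr
    rcases nil_or_wellBracketed hz hrq with rfl | hz
    · exact .inr (by simpa using hy)
    · exact .inr (hy.append hz)
end

theorem ne_nil {G : PHedge} (hG : G ≠ []) (h : Instance (flatHedge G) x) : x ≠ [] := by
  rintro rfl
  rcases hX : flatHedge G with _ | ⟨t, X⟩
  · exact flatHedge_ne_nil hG hX
  · rw [hX, ← List.singleton_append] at h
    obtain ⟨a, b, ha, -, hab⟩ := append_iff.1 h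
    obtain ⟨rfl, -⟩ := List.append_eq_nil_iff.1 hab.symm
    rcases t with A | _ | _
    · exact (wellBracketed_of_mem_denote (leaf_iff.1 ha)).ne_nil rfl
    all_goals cases ha

theorem map_embed (X : List (Token Unit PTy)) :
    Instance X (X.map (Token.map (fun _ => 0) embed)) := by
  induction X with
  | nil => exact nil
  | cons t X ih =>
    cases t with
    | ty A => exact ih.ty (embed_mem_denote_and_cutFree A).1
    | op => exact ih.op
    | cl => exact ih.cl

end Instance

/-- Validity of a sequent in the phase semantics. -/
def Valid (G : PHedge) (C : PTy) : Prop := ∀ x, Instance (flatHedge G) x → x ∈ denote C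

namespace Valid

variable {G D Z Z' : PHedge} {K : PCtx} {B C : PTy}

theorem plug (h : Valid (K.plug Z') C)
    (hZ : ∀ z, Instance (flatHedge Z) z → Instance (flatHedge Z') z) : Valid (K.plug Z) C := by
  intro x hx
  obtain ⟨L, z, R, rfl, hz, hK⟩ := hx.plug
  exact h _ (hK _ _ (hZ z hz))

theorem plug_leaf (h : Valid (K.plug Z') C) (hP : denote A = closure P)
    (hZ' : ∀ y ∈ P, Instance (flatHedge Z') y) (hy : y ∈ P) (hy' : WellBracketed y) :
    Valid (K.plug [.leaf A]) C := by
  intro x hx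
  obtain ⟨L, z, R, rfl, hz, hK⟩ := hx.plug
  exact mem_denote_of_closure (fun y hy => h _ (hK _ _ (hZ' y hy)))
    (hP ▸ Instance.leaf_iff.1 hz) hy hy'

theorem ldivL (hG : Valid G A) (h : Valid (K.plug [.leaf B]) C) :
    Valid (K.plug (G ++ [.leaf (.ldiv A B)])) C := by
  refine h.plug fun z hz => ?_
  rw [flatHedge_append] at hz
  obtain ⟨g, y, hg, hy, rfl⟩ := Instance.append_iff.1 hz
  exact Instance.leaf_iff.2 ((Instance.leaf_iff.1 hy).2 g (hG g hg))

theorem rdivL (hG : Valid G A) (h : Valid (K.plug [.leaf B]) C) :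
    Valid (K.plug (.leaf (.rdiv B A) :: G)) C := by
  refine h.plug fun z hz => ?_
  rw [← List.singleton_append, flatHedge_append] at hz
  obtain ⟨y, g, hy, hg, rfl⟩ := Instance.append_iff.1 hz
  exact Instance.leaf_iff.2 ((Instance.leaf_iff.1 hy).2 g (hG g hg))

theorem ldivR (hG : G ≠ []) (h : Valid (.leaf A :: G) B) : Valid G (.ldiv A B) := by
  intro x hx
  have hAB (a) (ha : a ∈ denote A) : a ++ x ∈ denote B := h _ (hx.ty ha)
  have hwb := wellBracketed_of_mem_denote (hAB _ (embed_mem_denote_and_cutFree A).1)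
  exact ⟨Runs.false_of_empty_stack hwb (hx.ne_nil hG), hAB⟩

theorem rdivR (hG : G ≠ []) (h : Valid (G ++ [.leaf A]) B) : Valid G (.rdiv B A) := by
  intro x hx
  have hAB (a) (ha : a ∈ denote A) : x ++ a ∈ denote B := h _ <| by
    rw [flatHedge_append]
    exact Instance.append_iff.2 ⟨x, a, hx, Instance.leaf_iff.2 ha, rfl⟩
  have hwb := wellBracketed_of_mem_denote (hAB _ (embed_mem_denote_and_cutFree A).1)
  exact ⟨(hwb.nil_or_of_overlap (S := []) (by exact .singleton_ty _)).1.resolve_left (hx.ne_nil hG),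
    hAB⟩

theorem mulL (h : Valid (K.plug [.leaf A, .leaf B]) C) : Valid (K.plug [.leaf (.mul A B)]) C := by
  refine h.plug_leaf rfl ?_ ⟨_, (embed_mem_denote_and_cutFree A).1, _,
    (embed_mem_denote_and_cutFree B).1, rfl⟩ (.leaf_append _ (.inr (.singleton_ty _)))
  rintro _ ⟨a, ha, b, hb, rfl⟩
  exact .ty ha (Instance.leaf_iff.2 hb)

theorem mulR (hG : Valid G A) (hD : Valid D B) : Valid (G ++ D) (.mul A B) := by
  intro x hx
  rw [flatHedge_append] at hx
  obtain ⟨y, z, hy, hz, rfl⟩ := Instance.append_iff.1 hx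
  refine subset_closure ?_ ⟨y, hG y hy, z, hD z hz, rfl⟩
  rintro _ ⟨a, ha, b, hb, rfl⟩
  exact (wellBracketed_of_mem_denote ha).append (wellBracketed_of_mem_denote hb)

theorem diaL (h : Valid (K.plug [.node [.leaf A]]) C) : Valid (K.plug [.leaf (.dia A)]) C := by
  refine h.plug_leaf rfl ?_ ⟨_, (embed_mem_denote_and_cutFree A).1, rfl⟩
    (wellBracketed_bracketed_ty 0 _)
  rintro _ ⟨a, ha, rfl⟩
  exact Instance.node_iff.2 ⟨a, Instance.leaf_iff.2 ha, rfl⟩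

theorem diaR (hG : Valid G A) : Valid [.node G] (.dia A) := by
  intro x hx
  obtain ⟨y, hy, rfl⟩ := Instance.node_iff.1 hx
  refine subset_closure ?_ ⟨y, hG y hy, rfl⟩
  rintro _ ⟨a, ha, rfl⟩
  exact (wellBracketed_of_mem_denote ha).bracket 0

theorem boxL (h : Valid (K.plug [.leaf A]) C) : Valid (K.plug [.node [.leaf (.box A)]]) C := by
  refine h.plug fun z hz => ?_
  obtain ⟨y, hy, rfl⟩ := Instance.node_iff.1 hz
  exact Instance.leaf_iff.2 (Instance.leaf_iff.1 hy).2

theorem boxR (h : Valid [.node G] A) : Valid G (.box A) := by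
  intro x hx
  have hxA := h _ (Instance.node_iff.2 ⟨x, hx, rfl⟩)
  have hrun := WellBracketed.bracket_iff.1 (wellBracketed_of_mem_denote hxA)
  refine ⟨(hx.nil_or_wellBracketed hrun).resolve_left ?_, hxA⟩
  rintro rfl
  simp [Runs] at hrun

theorem of_pProv (h : PProv G C) : Valid G C := by
  induction h with
  | id p => exact fun x => Instance.leaf_iff.1
  | ldivL G K A B C _ _ ihG ih => exact ihG.ldivL ih
  | ldivR G A B hG _ ih => exact ih.ldivR hG
  | rdivL G K A B C _ _ ihG ih => exact ihG.rdivL ih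
  | rdivR G A B hG _ ih => exact ih.rdivR hG
  | mulL K A B C _ ih => exact ih.mulL
  | mulR G D A B _ _ ihG ihD => exact ihG.mulR ihD
  | diaL K A C _ ih => exact ih.diaL
  | diaR G A _ ih => exact ih.diaR
  | boxL K A C _ ih => exact ih.boxL
  | boxR G A _ ih => exact ih.boxR
  | cut G K A C _ _ ihG ih => exact ih.plug fun z hz => Instance.leaf_iff.2 (ihG z hz)

end Valid

theorem CutFree.of_pProv {G : PHedge} {C : PTy} (h : PProv G C) :
    CutFree ((flatHedge G).map (Token.map (fun _ => 0) embed)) (embed C) :=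
  (embed_mem_denote_and_cutFree C).2 _ (Valid.of_pProv h _ (.map_embed _))

end PhaseSemantics

/-! ### Thinning -/

section Relabelling

variable {α β : Type*} {φ : α → β} {X : LSeq α} {A C : LType α}

theorem CutFree.map (φ : α → β) (h : CutFree X C) : CutFree (LSeq.map φ X) (C.map φ) := by
  induction h with
  | id a => exact .id _
  | ldivL G L R A B C _ _ ihG ih =>
    simpa [Token.map, LType.map] using ldivL _ _ _ _ _ _ ihG (by simpa [Token.map] using ih)
  | ldivR X A B hX _ ih => exact .ldivR _ _ _ (by simpa using hX) ih
  | rdivL G L R A B C _ _ ihG ih =>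
    simpa [Token.map, LType.map] using rdivL _ _ _ _ _ _ ihG (by simpa [Token.map] using ih)
  | rdivR X A B hX _ ih => exact .rdivR _ _ _ (by simpa using hX) (by simpa [Token.map] using ih)
  | mulL L R A B C _ ih =>
    simpa [Token.map, LType.map] using mulL _ _ _ _ _ (by simpa [Token.map] using ih)
  | mulR G D A B _ _ ihG ihD => simpa [LType.map] using mulR _ _ _ _ ihG ihD
  | diaL i L R A C _ ih =>
    simpa [Token.map, LType.map] using diaL _ _ _ _ _ (by simpa [Token.map] using ih)
  | diaR i G A _ ih => simpa [Token.map, LType.map] using diaR (φ i) _ _ ih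
  | boxL i L R A C _ ih =>
    simpa [Token.map, LType.map] using boxL (φ i) _ _ _ _ (by simpa [Token.map] using ih)
  | boxR i G A hG _ ih => exact .boxR _ _ _ (hG.map _ _) (by simpa [Token.map] using ih)

theorem LType.word_map (φ : α → β) (A : LType α) :
    (A.map φ).word = A.word.map (Prod.map (Letter.map φ) id) := by
  induction A <;> simp_all [word, map, Letter.map, FreeGroup.invRev, Function.comp_def]

theorem LSeq.word_map (φ : α → β) (X : LSeq α) :
    LSeq.word (LSeq.map φ X) = (LSeq.word X).map (Prod.map (Letter.map φ) id) := by
  induction X with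
  | nil => rfl
  | cons t X ih =>
    cases t <;> simp_all [word, Token.map, Token.word, LType.word_map, Letter.map]

theorem LSeq.map_map {γ : Type*} (φ : α → β) (ψ : β → γ) (X : LSeq α) :
    LSeq.map ψ (LSeq.map φ X) = LSeq.map (ψ ∘ φ) X := by
  simp only [LSeq.map, List.map_map, List.map_inj_left, Function.comp_apply, Token.map_map]
  intro t _
  congr 1
  exact funext fun A => LType.map_map φ ψ A

variable [DecidableEq β]

theorem occ_map_of_injective [DecidableEq α] (hφ : φ.Injective) (X : LSeq α) (C : LType α)
    (g : Letter α) :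
    LSeq.occ (LSeq.map φ X) (g.map φ) + (C.map φ).occ (g.map φ) = LSeq.occ X g + C.occ g := by
  have count (w : List (Letter α × Bool)) :
      ((w.map (Prod.map (Letter.map φ) id)).map Prod.fst).count (g.map φ) =
        (w.map Prod.fst).count g := by
    rw [← List.count_map_of_injective _ _ (Letter.map_injective hφ), List.map_map, List.map_map]
    rfl
  simp only [LSeq.occ, LType.occ, LSeq.word_map, LType.word_map, count]

theorem occ_map_of_notMem_range {g : Letter β} (hg : g ∉ Set.range (Letter.map φ)) (X : LSeq α)
    (C : LType α) : LSeq.occ (LSeq.map φ X) g + (C.map φ).occ g = 0 := by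
  have count (w : List (Letter α × Bool)) :
      ((w.map (Prod.map (Letter.map φ) id)).map Prod.fst).count g = 0 := by
    refine List.count_eq_zero.2 fun h => hg ?_
    obtain ⟨x, -, hx⟩ := List.mem_map.1 (by simpa only [List.map_map] using h)
    exact ⟨x.1, hx⟩
  simp only [LSeq.occ, LType.occ, LSeq.word_map, LType.word_map, count]

end Relabelling

/-- A sequent is thin if each letter occurs at most twice in it. -/
def Thin {α : Type*} [DecidableEq α] (X : LSeq α) (C : LType α) : Prop :=
  ∀ g, LSeq.occ X g + C.occ g ≤ 2

/-- The sequent `X ⇒ C` is obtained by identifying labels in a derivable thin sequent. -/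
def HasThinning {β : Type*} (X : LSeq β) (C : LType β) : Prop :=
  ∃ (α : Type) (_ : DecidableEq α) (φ : α → β) (X' : LSeq α) (C' : LType α),
    CutFree X' C' ∧ LSeq.map φ X' = X ∧ C'.map φ = C ∧ Thin X' C'

section Thinning

variable {β : Type*} {X Y G L R : LSeq β} {A B C D : LType β} {i : β}

/-- Two thinnings can be made disjoint by taking the sum of their sets of labels. -/
theorem HasThinning.exists_common (h : HasThinning X C) (h' : HasThinning Y D) :
    ∃ (α : Type) (_ : DecidableEq α) (φ : α → β) (X' : LSeq α) (C' : LType α) (Y' : LSeq α)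
      (D' : LType α), CutFree X' C' ∧ CutFree Y' D' ∧ LSeq.map φ X' = X ∧ C'.map φ = C ∧
        LSeq.map φ Y' = Y ∧ D'.map φ = D ∧
        ∀ g, LSeq.occ X' g + C'.occ g + (LSeq.occ Y' g + D'.occ g) ≤ 2 := by
  obtain ⟨α, _, φ, X', C', hX, rfl, rfl, ht⟩ := h
  obtain ⟨α', _, φ', Y', D', hY, rfl, rfl, ht'⟩ := h'
  refine ⟨α ⊕ α', inferInstance, Sum.elim φ φ', LSeq.map Sum.inl X', C'.map Sum.inl,
    LSeq.map Sum.inr Y', D'.map Sum.inr, hX.map _, hY.map _, ?_, ?_, ?_, ?_, fun g => ?_⟩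
  · simp only [LSeq.map_map, Sum.elim_comp_inl]
  · simp only [LType.map_map, Sum.elim_comp_inl]
  · simp only [LSeq.map_map, Sum.elim_comp_inr]
  · simp only [LType.map_map, Sum.elim_comp_inr]
  by_cases hg : g ∈ Set.range (Letter.map (Sum.inl : α → α ⊕ α'))
  · obtain ⟨g₀, rfl⟩ := hg
    have hr : g₀.map Sum.inl ∉ Set.range (Letter.map (Sum.inr : α' → α ⊕ α')) := by
      rintro ⟨g₁, h⟩
      cases g₀ <;> cases g₁ <;> simp [Letter.map] at h
    rw [occ_map_of_injective Sum.inl_injective, occ_map_of_notMem_range hr]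
    exact ht g₀
  by_cases hr : g ∈ Set.range (Letter.map (Sum.inr : α' → α ⊕ α'))
  · obtain ⟨g₀, rfl⟩ := hr
    rw [occ_map_of_injective Sum.inr_injective, occ_map_of_notMem_range hg, zero_add]
    exact ht' g₀
  · rw [occ_map_of_notMem_range hg, occ_map_of_notMem_range hr]
    decide

theorem HasThinning.exists_fresh (h : HasThinning X C) (i : β) :
    ∃ (α : Type) (_ : DecidableEq α) (φ : α → β) (X' : LSeq α) (C' : LType α) (j : α),
      CutFree X' C' ∧ LSeq.map φ X' = X ∧ C'.map φ = C ∧ φ j = i ∧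
        ∀ g, LSeq.occ X' g + C'.occ g +
          2 * ([Letter.op j].count g + [Letter.cl j].count g) ≤ 2 := by
  obtain ⟨α, _, φ, X', C', hX, rfl, rfl, ht⟩ := h
  refine ⟨α ⊕ Unit, inferInstance, Sum.elim φ fun _ => i, LSeq.map Sum.inl X', C'.map Sum.inl,
    .inr (), hX.map _, ?_, ?_, rfl, fun g => ?_⟩
  · simp only [LSeq.map_map, Sum.elim_comp_inl]
  · simp only [LType.map_map, Sum.elim_comp_inl]
  by_cases hg : g ∈ Set.range (Letter.map (Sum.inl : α → α ⊕ Unit))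
  · obtain ⟨g₀, rfl⟩ := hg
    have h₀ : [Letter.op (Sum.inr ())].count (g₀.map Sum.inl : Letter (α ⊕ Unit)) +
        [Letter.cl (Sum.inr ())].count (g₀.map Sum.inl) = 0 := by
      cases g₀ <;> simp [Letter.map]
    rw [h₀, occ_map_of_injective Sum.inl_injective]
    exact ht g₀
  · rw [occ_map_of_notMem_range hg]
    cases g <;> simp [List.count_singleton] <;> split_ifs <;> simp

namespace HasThinning

theorem id (a : β) : HasThinning [.ty (.prim a)] (.prim a) :=
  ⟨Unit, inferInstance, fun _ => a, _, _, .id (), rfl, rfl,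
    by rintro (g | g | g) <;> decide +revert⟩

theorem ldivL (h : HasThinning G A) (h' : HasThinning (L ++ .ty B :: R) C) :
    HasThinning (L ++ (G ++ .ty (.ldiv A B) :: R)) C := by
  obtain ⟨α, _, φ, G', A', X', C', hG, hX, rfl, rfl, hX', rfl, ht⟩ := h.exists_common h'
  simp only [LSeq.map, List.map_eq_append_iff, List.map_eq_cons_iff, Token.map_eq_ty] at hX'
  obtain ⟨L', _, rfl, rfl, _, R', rfl, ⟨B', rfl, rfl⟩, rfl⟩ := hX'
  refine ⟨α, inferInstance, φ, _, _, .ldivL _ _ _ _ _ _ hG hX, ?_, rfl, fun g => ?_⟩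
  · simp [LType.map]
  · have := ht g
    simp only [LSeq.occ_append, LSeq.occ_cons_ty, LType.occ_ldiv] at this ⊢
    omega

theorem rdivL (h : HasThinning G A) (h' : HasThinning (L ++ .ty B :: R) C) :
    HasThinning (L ++ .ty (.rdiv B A) :: (G ++ R)) C := by
  obtain ⟨α, _, φ, G', A', X', C', hG, hX, rfl, rfl, hX', rfl, ht⟩ := h.exists_common h'
  simp only [LSeq.map, List.map_eq_append_iff, List.map_eq_cons_iff, Token.map_eq_ty] at hX'
  obtain ⟨L', _, rfl, rfl, _, R', rfl, ⟨B', rfl, rfl⟩, rfl⟩ := hX'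
  refine ⟨α, inferInstance, φ, _, _, .rdivL _ _ _ _ _ _ hG hX, ?_, rfl, fun g => ?_⟩
  · simp [LType.map]
  · have := ht g
    simp only [LSeq.occ_append, LSeq.occ_cons_ty, LType.occ_rdiv] at this ⊢
    omega

theorem mulR (h : HasThinning X A) (h' : HasThinning Y B) : HasThinning (X ++ Y) (.mul A B) := by
  obtain ⟨α, _, φ, X', A', Y', B', hX, hY, rfl, rfl, rfl, rfl, ht⟩ := h.exists_common h'
  refine ⟨α, inferInstance, φ, _, _, hX.mulR _ _ _ _ hY, List.map_append, rfl, fun g => ?_⟩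
  have := ht g
  simp only [LSeq.occ_append, LType.occ_mul] at this ⊢
  omega

theorem mulL (h : HasThinning (L ++ .ty A :: .ty B :: R) C) :
    HasThinning (L ++ .ty (.mul A B) :: R) C := by
  obtain ⟨α, _, φ, X', C', hX, hX', rfl, ht⟩ := h
  simp only [LSeq.map, List.map_eq_append_iff, List.map_eq_cons_iff, Token.map_eq_ty] at hX'
  obtain ⟨L', _, rfl, rfl, _, _, rfl, ⟨A', rfl, rfl⟩, _, R', rfl, ⟨B', rfl, rfl⟩, rfl⟩ := hX'
  refine ⟨α, inferInstance, φ, _, _, hX.mulL _ _ _ _ _, ?_, rfl, fun g => ?_⟩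
  · simp [LType.map]
  · have := ht g
    simp only [LSeq.occ_append, LSeq.occ_cons_ty, LType.occ_mul] at this ⊢
    omega

theorem ldivR (hX₀ : X ≠ []) (h : HasThinning (.ty A :: X) B) : HasThinning X (.ldiv A B) := by
  obtain ⟨α, _, φ, X', B', hX, hX', rfl, ht⟩ := h
  simp only [LSeq.map, List.map_eq_cons_iff, Token.map_eq_ty] at hX'
  obtain ⟨_, Y', rfl, ⟨A', rfl, rfl⟩, rfl⟩ := hX'
  refine ⟨α, inferInstance, φ, _, _, hX.ldivR _ _ _ (by simpa using hX₀), rfl, rfl, fun g => ?_⟩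
  have := ht g
  simp only [LSeq.occ_cons_ty, LType.occ_ldiv] at this ⊢
  omega

theorem rdivR (hX₀ : X ≠ []) (h : HasThinning (X ++ [.ty A]) B) : HasThinning X (.rdiv B A) := by
  obtain ⟨α, _, φ, X', B', hX, hX', rfl, ht⟩ := h
  simp only [LSeq.map, List.map_eq_append_iff, List.map_eq_singleton_iff, Token.map_eq_ty] at hX'
  obtain ⟨Y', _, rfl, rfl, _, rfl, A', rfl, rfl⟩ := hX'
  refine ⟨α, inferInstance, φ, _, _, hX.rdivR _ _ _ (by simpa using hX₀), rfl, rfl, fun g => ?_⟩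
  have := ht g
  simp only [LSeq.occ_append, LSeq.occ_cons_ty, LSeq.occ_nil, LType.occ_rdiv] at this ⊢
  omega

theorem diaL (h : HasThinning (L ++ .op i :: .ty A :: .cl i :: R) C) :
    HasThinning (L ++ .ty (.dia i A) :: R) C := by
  obtain ⟨α, _, φ, X', C', hX, hX', rfl, ht⟩ := h
  simp only [LSeq.map, List.map_eq_append_iff, List.map_eq_cons_iff, Token.map_eq_ty,
    Token.map_eq_op, Token.map_eq_cl] at hX'
  obtain ⟨L', _, rfl, rfl, _, _, rfl, ⟨j, rfl, rfl⟩, _, _, rfl, ⟨A', rfl, rfl⟩, _, R', rfl,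
    ⟨k, rfl, -⟩, rfl⟩ := hX'
  obtain rfl : j = k := by
    obtain ⟨_, -, _, -, hs, -⟩ := runs_append.1 hX.wellBracketed
    exact (List.cons.inj hs).1
  refine ⟨α, inferInstance, φ, _, _, hX.diaL _ _ _ _ _, ?_, rfl, fun g => ?_⟩
  · simp [LType.map]
  · have := ht g
    simp only [LSeq.occ_append, LSeq.occ_cons_ty, LSeq.occ_cons_op, LSeq.occ_cons_cl,
      LType.occ_dia] at this ⊢
    omega

theorem diaR (i : β) (h : HasThinning X A) :
    HasThinning (.op i :: (X ++ [.cl i])) (.dia i A) := by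
  obtain ⟨α, _, φ, X', A', j, hX, rfl, rfl, rfl, ht⟩ := h.exists_fresh i
  refine ⟨α, inferInstance, φ, _, _, hX.diaR j _ _, by simp, rfl, fun g => ?_⟩
  have := ht g
  simp only [LSeq.occ_append, LSeq.occ_cons_op, LSeq.occ_cons_cl, LSeq.occ_nil,
    LType.occ_dia] at this ⊢
  omega

theorem boxL (i : β) (h : HasThinning (L ++ .ty A :: R) C) :
    HasThinning (L ++ .op i :: .ty (.box i A) :: .cl i :: R) C := by
  obtain ⟨α, _, φ, X', C', j, hX, hX', rfl, rfl, ht⟩ := h.exists_fresh i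
  simp only [LSeq.map, List.map_eq_append_iff, List.map_eq_cons_iff, Token.map_eq_ty] at hX'
  obtain ⟨L', _, rfl, rfl, _, R', rfl, ⟨A', rfl, rfl⟩, rfl⟩ := hX'
  refine ⟨α, inferInstance, φ, _, _, hX.boxL j _ _ _ _, ?_, rfl, fun g => ?_⟩
  · simp [LType.map]
  · have := ht g
    simp only [LSeq.occ_append, LSeq.occ_cons_ty, LSeq.occ_cons_op, LSeq.occ_cons_cl,
      LType.occ_box] at this ⊢
    omega

theorem boxR (hX₀ : WellBracketed X) (h : HasThinning (.op i :: (X ++ [.cl i])) A) :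
    HasThinning X (.box i A) := by
  obtain ⟨α, _, φ, X', A', hX, hX', rfl, ht⟩ := h
  simp only [LSeq.map, List.map_eq_append_iff, List.map_eq_cons_iff, List.map_eq_nil_iff,
    Token.map_eq_op, Token.map_eq_cl] at hX'
  obtain ⟨_, _, rfl, ⟨j, rfl, rfl⟩, Y', _, rfl, rfl, _, _, rfl, ⟨k, rfl, -⟩, rfl⟩ := hX'
  obtain ⟨r, hr, hk⟩ := runs_append.1 hX.wellBracketed
  obtain ⟨t, ht', rfl, hmap⟩ := Runs.of_map φ (LType.map φ) (s := []) (u := [j]) hr hX₀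
  obtain rfl : t = [] := by simpa using hmap
  obtain ⟨_, -, hs, -⟩ := hk
  obtain rfl : j = k := (List.cons.inj hs).1
  refine ⟨α, inferInstance, φ, _, _, hX.boxR j _ _ ht', rfl, rfl, fun g => ?_⟩
  have := ht g
  simp only [LSeq.occ_append, LSeq.occ_cons_op, LSeq.occ_cons_cl, LSeq.occ_nil,
    LType.occ_box] at this ⊢
  omega

end HasThinning

theorem CutFree.hasThinning (h : CutFree X C) : HasThinning X C := by
  induction h with
  | id a => exact .id a
  | ldivL _ _ _ _ _ _ _ _ ihG ih => exact ihG.ldivL ih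
  | ldivR _ _ _ hX _ ih => exact ih.ldivR hX
  | rdivL _ _ _ _ _ _ _ _ ihG ih => exact ihG.rdivL ih
  | rdivR _ _ _ hX _ ih => exact ih.rdivR hX
  | mulL _ _ _ _ _ _ ih => exact ih.mulL
  | mulR _ _ _ _ _ _ ihX ihY => exact ihX.mulR ihY
  | diaL _ _ _ _ _ _ ih => exact ih.diaL
  | diaR i _ _ _ ih => exact ih.diaR i
  | boxL i _ _ _ _ _ ih => exact ih.boxL i
  | boxR _ _ _ hX _ ih => exact ih.boxR hX

end Thinning

/-! ### Norms in free groups -/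

section FreeGroup

open FreeGroup hiding norm

theorem exists_common_prefix {τ : Type*} (u v : List τ) :
    ∃ c u' v', u = c ++ u' ∧ v = c ++ v' ∧ ∀ a ∈ u'.head?, ∀ b ∈ v'.head?, a ≠ b := by
  by_cases h : ∃ a u' v', u = a :: u' ∧ v = a :: v'
  · obtain ⟨a, u', v', rfl, rfl⟩ := h
    obtain ⟨c, u'', v'', rfl, rfl, hne⟩ := exists_common_prefix u' v'
    exact ⟨a :: c, u'', v'', rfl, rfl, hne⟩
  · refine ⟨[], u, v, rfl, rfl, ?_⟩
    rintro a ha _ hb rfl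
    obtain ⟨u', rfl⟩ := List.head?_eq_some_iff.1 ha
    obtain ⟨v', rfl⟩ := List.head?_eq_some_iff.1 hb
    exact h ⟨a, u', v', rfl, rfl⟩

variable {α : Type*} [DecidableEq α] {a b : α} {x y z : FreeGroup α}

theorem norm_mk_of_isReduced {w : List (α × Bool)} (h : FreeGroup.IsReduced w) :
    (mk w).norm = w.length := by
  rw [FreeGroup.norm, toWord_mk, h.reduce_eq]

theorem inv_mul_eq_mk {c u v : List (α × Bool)} (hx : x.toWord = c ++ u) (hy : y.toWord = c ++ v) :
    x⁻¹ * y = mk (invRev u ++ v) := by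
  rw [← mk_toWord (x := x), ← mk_toWord (x := y), hx, hy, ← mul_mk, ← mul_mk, ← mul_mk, ← inv_mk]
  group

theorem norm_inv_mul_add_le_of_prefix {c : List (α × Bool)} (hx : c <+: x.toWord)
    (hy : c <+: y.toWord) : (x⁻¹ * y).norm + 2 * c.length ≤ x.norm + y.norm := by
  obtain ⟨u, hu⟩ := hx
  obtain ⟨v, hv⟩ := hy
  have hle : (x⁻¹ * y).norm ≤ u.length + v.length := by
    simpa [inv_mul_eq_mk hu.symm hv.symm] using norm_mk_le (L₁ := invRev u ++ v)
  have hx : x.norm = c.length + u.length := by rw [FreeGroup.norm, ← hu, List.length_append]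
  have hy : y.norm = c.length + v.length := by rw [FreeGroup.norm, ← hv, List.length_append]
  omega

theorem exists_prefix_norm_inv_mul_add (x y : FreeGroup α) :
    ∃ c, c <+: x.toWord ∧ c <+: y.toWord ∧
      (x⁻¹ * y).norm + 2 * c.length = x.norm + y.norm := by
  obtain ⟨c, u, v, hu, hv, hne⟩ := exists_common_prefix x.toWord y.toWord
  have hred : FreeGroup.IsReduced (invRev u ++ v) := by
    refine List.isChain_append.2 ⟨?_, ?_, fun p hp q hq hpq => ?_⟩
    · have h := isReduced_toWord (x := x⁻¹)
      rw [toWord_inv, hu, invRev_append] at h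
      exact List.IsChain.left_of_append h
    · have h := isReduced_toWord (x := y)
      rw [hv] at h
      exact List.IsChain.right_of_append h
    · obtain ⟨p', hp', rfl⟩ : ∃ p' ∈ u.head?, (p'.1, !p'.2) = p := by
        simpa only [invRev, List.getLast?_reverse, List.head?_map, Option.mem_map] using hp
      exact Bool.not_eq.2 fun h => hne p' hp' q hq (Prod.ext hpq h)
  refine ⟨c, ⟨u, hu.symm⟩, ⟨v, hv.symm⟩, ?_⟩
  have hx : x.norm = c.length + u.length := by rw [FreeGroup.norm, hu, List.length_append]
  have hy : y.norm = c.length + v.length := by rw [FreeGroup.norm, hv, List.length_append]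
  rw [inv_mul_eq_mk hu hv, norm_mk_of_isReduced hred, hx, hy, List.length_append, invRev_length]
  omega

/-- The four-point inequality of the Cayley tree, based at the identity. -/
theorem norm_add_norm_inv_mul_le_max (p q r : FreeGroup α) :
    p.norm + (q⁻¹ * r).norm ≤ max (q.norm + (p⁻¹ * r).norm) (r.norm + (p⁻¹ * q).norm) := by
  obtain ⟨c, hcp, hcq, hc⟩ := exists_prefix_norm_inv_mul_add p q
  obtain ⟨d, hdp, hdr, hd⟩ := exists_prefix_norm_inv_mul_add p r
  rcases le_total c.length d.length with hle | hle
  · have hcr := (List.prefix_of_prefix_length_le hcp hdp hle).trans hdr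
    have := norm_inv_mul_add_le_of_prefix hcq hcr
    omega
  · have hdq := (List.prefix_of_prefix_length_le hdp hcp hle).trans hcq
    have := norm_inv_mul_add_le_of_prefix hdq hdr
    omega

theorem norm_le_norm_mul_prod_of_isChain {l : List (FreeGroup α)} {w u : FreeGroup α}
    (hl : (u :: l).IsChain fun x y => max x.norm y.norm < (x * y).norm)
    (hw : (w * u⁻¹).norm < w.norm) : w.norm ≤ (w * l.prod).norm := by
  induction l generalizing w u with
  | nil => simp
  | cons v l ih =>
    obtain ⟨huv, hl⟩ := List.isChain_cons_cons.1 hl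
    have hwv : w.norm < (w * v).norm := by
      have h := norm_add_norm_inv_mul_le_max w⁻¹ u⁻¹ v
      simp only [norm_inv_eq, inv_inv] at h
      omega
    have := ih (w := w * v) hl (by simpa using hwv)
    rw [List.prod_cons, ← mul_assoc]
    omega

/-- Pentus' lemma: in a product equal to `1`, some two adjacent factors have a product no longer
than one of them. -/
theorem exists_adjacent_norm_mul_le_max {l : List (FreeGroup α)} (hl : l.prod = 1)
    (h₂ : 2 ≤ l.length) :
    ∃ L x y R, l = L ++ x :: y :: R ∧ (x * y).norm ≤ max x.norm y.norm := by
  by_contra! h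
  match l, h₂ with
  | u :: v :: l, _ =>
    have hchain : (u :: v :: l).IsChain fun x y => max x.norm y.norm < (x * y).norm :=
      List.isChain_iff_forall_rel_of_append_cons_cons.2 fun x y L R hl => h L x y R hl
    have huv := (List.isChain_cons_cons.1 hchain).1
    have hu : u.norm ≠ 0 := fun hu => by simp [norm_eq_zero.1 hu] at huv
    have := norm_le_norm_mul_prod_of_isChain (w := u) hchain
      (by simpa [Nat.pos_iff_ne_zero] using hu)
    rw [← List.prod_cons, hl, FreeGroup.norm_one] at this
    omega

theorem exists_segment_norm_prod_le {l : List (FreeGroup α)} {m : ℕ} (h₃ : 3 ≤ l.length)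
    (hl : ∀ x ∈ l, x.norm ≤ m) (hm : l.prod.norm ≤ m) :
    ∃ L T R, l = L ++ (T ++ R) ∧ 2 ≤ T.length ∧ T.length < l.length ∧ T.prod.norm ≤ m := by
  obtain ⟨L, x, y, R, h, hxy⟩ :=
    exists_adjacent_norm_mul_le_max (l := l ++ [l.prod⁻¹]) (by simp) (by simp; omega)
  have hmem (z) (hz : z ∈ l ++ [l.prod⁻¹]) : z.norm ≤ m := by
    rcases List.mem_append.1 hz with hz | hz
    · exact hl z hz
    · rwa [List.mem_singleton.1 hz, norm_inv_eq]
  have hxy : (x * y).norm ≤ m :=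
    hxy.trans (max_le (hmem x (by simp [h])) (hmem y (by simp [h])))
  rcases R.eq_nil_or_concat' with rfl | ⟨R, z, rfl⟩
  · obtain ⟨rfl, rfl⟩ : l = L ++ [x] ∧ l.prod⁻¹ = y :=
      List.append_singleton_inj.1 (h.trans (by simp))
    refine ⟨[], L, [x], rfl, ?_, by simp, ?_⟩
    · simpa using h₃
    · simpa using hxy
  · obtain ⟨rfl, -⟩ : l = L ++ x :: y :: R ∧ l.prod⁻¹ = z :=
      List.append_singleton_inj.1 (by simpa only [List.append_assoc, List.cons_append] using h)
    exact ⟨L, [x, y], R, rfl, le_rfl, by simp at h₃ ⊢; omega, by simpa using hxy⟩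

/-- The elements of the free group whose reduced words do not involve the generator `a`. -/
def avoiding (a : α) : Subgroup (FreeGroup α) where
  carrier := {x | ∀ p ∈ x.toWord, p.1 ≠ a}
  one_mem' := by simp
  mul_mem' {x y} hx hy p hp :=
    (List.mem_append.1 ((toWord_mul_sublist x y).mem hp)).elim (hx p) (hy p)
  inv_mem' {x} hx p hp := by
    obtain ⟨q, hq, rfl⟩ : ∃ q ∈ x.toWord, (q.1, !q.2) = p := by
      simpa [toWord_inv, invRev] using hp
    exact hx q hq

theorem mk_mem_avoiding {w : List (α × Bool)} (h : (w.map Prod.fst).count a = 0) :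
    mk w ∈ avoiding a := by
  intro p hp
  rintro rfl
  exact List.count_eq_zero.1 h (List.mem_map_of_mem (reduce.red.sublist.mem (by simpa using hp)))

theorem of_mem_avoiding (h : b ≠ a) : of b ∈ avoiding a := by
  intro p hp
  obtain rfl : p = (b, true) := by simpa using hp
  exact h

theorem norm_mul_of_mul (hx : x ∈ avoiding a) (hy : y ∈ avoiding a) :
    (x * of a * y).norm = x.norm + 1 + y.norm := by
  have hred : FreeGroup.IsReduced (x.toWord ++ (a, true) :: y.toWord) := by
    refine List.isChain_append.2 ⟨isReduced_toWord, List.isChain_cons.2 ⟨fun p hp h => ?_,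
      isReduced_toWord⟩, fun p hp q hq h => ?_⟩
    · exact absurd h.symm (hy p (List.mem_of_mem_head? hp))
    · obtain rfl : (a, true) = q := by simpa using hq
      exact absurd h (hx p (List.mem_of_getLast? hp))
  have hmk : x * of a * y = mk (x.toWord ++ (a, true) :: y.toWord) := by
    rw [← List.singleton_append, ← mul_mk, ← mul_mk, mk_toWord, mk_toWord, mul_assoc]
    rfl
  rw [hmk, norm_mk_of_isReduced hred, List.length_append, List.length_cons]
  simp only [FreeGroup.norm]
  omega

theorem norm_add_two_le_norm_mul_of_mul_of_mul (hab : a ≠ b) (hx : x ∈ avoiding a)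
    (hya : y ∈ avoiding a) (hyb : y ∈ avoiding b) (hza : z ∈ avoiding a) (hzb : z ∈ avoiding b) :
    y.norm + 2 ≤ (x * of a * (y * of b * z)).norm := by
  rw [norm_mul_of_mul hx (mul_mem (mul_mem hya (of_mem_avoiding hab.symm)) hza),
    norm_mul_of_mul hyb hzb]
  omega

theorem norm_mk_of_nodup {w : List (α × Bool)} (h : (w.map Prod.fst).Nodup) :
    (mk w).norm = w.length :=
  norm_mk_of_isReduced <| List.Pairwise.isChain <|
    (List.pairwise_map.1 h).imp fun hne heq => absurd heq hne

/-- The exponent sum of the generator `a`. -/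
def exponent (a : α) : FreeGroup α →* Multiplicative ℤ :=
  lift fun b => if b = a then .ofAdd 1 else 1

theorem exponent_mk_eq_one {w : List (α × Bool)} (h : (w.map Prod.fst).count a = 0) :
    exponent a (mk w) = 1 := by
  have hw : ∀ p ∈ w, p.1 ≠ a := fun p hp hpa =>
    List.count_eq_zero.1 h (hpa ▸ List.mem_map_of_mem hp)
  rw [exponent, lift_mk]
  refine List.prod_eq_one fun c hc => ?_
  obtain ⟨p, hp, rfl⟩ := List.mem_map.1 hc
  simp [hw p hp]

end FreeGroup

/-! ### The free group interpretation -/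

section Value

variable {α : Type*}

/-- The value of a type in the free group. -/
def LType.val (A : LType α) : FreeGroup (Letter α) := .mk A.word

/-- The value of a linearised hedge in the free group. -/
def LSeq.val (X : LSeq α) : FreeGroup (Letter α) := .mk (LSeq.word X)

variable {i : α} {A B C : LType α} {X Y L R T : LSeq α}

theorem LType.val_ldiv : (ldiv A B).val = A.val⁻¹ * B.val := by
  rw [val, word, ← FreeGroup.mul_mk, ← FreeGroup.inv_mk, val, val]

theorem LType.val_rdiv : (rdiv B A).val = B.val * A.val⁻¹ := by
  rw [val, word, ← FreeGroup.mul_mk, ← FreeGroup.inv_mk, val, val]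

theorem LType.val_mul : (mul A B).val = A.val * B.val := by
  rw [val, word, ← FreeGroup.mul_mk, val, val]

theorem LType.val_dia : (dia i A).val = .of (.op i) * A.val * .of (.cl i) := by
  rw [val, word, ← List.singleton_append, ← FreeGroup.mul_mk, ← FreeGroup.mul_mk, ← mul_assoc]
  rfl

theorem LType.val_box : (box i A).val = (.of (.op i))⁻¹ * A.val * (.of (.cl i))⁻¹ := by
  rw [val, word, ← List.singleton_append, ← FreeGroup.mul_mk, ← FreeGroup.mul_mk, ← mul_assoc]
  rfl

theorem LSeq.val_nil : LSeq.val ([] : LSeq α) = 1 := rfl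

theorem LSeq.val_append : LSeq.val (X ++ Y) = LSeq.val X * LSeq.val Y := by
  rw [val, word, List.flatMap_append, ← FreeGroup.mul_mk]
  rfl

theorem LSeq.val_cons_ty : LSeq.val (.ty A :: X) = A.val * LSeq.val X := by
  rw [val, word, List.flatMap_cons, ← FreeGroup.mul_mk]
  rfl

theorem LSeq.val_cons_op : LSeq.val (.op i :: X) = .of (.op i) * LSeq.val X := by
  rw [val, word, List.flatMap_cons, ← FreeGroup.mul_mk]
  rfl

theorem LSeq.val_cons_cl : LSeq.val (.cl i :: X) = .of (.cl i) * LSeq.val X := by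
  rw [val, word, List.flatMap_cons, ← FreeGroup.mul_mk]
  rfl

theorem CutFree.val_eq (h : CutFree X C) : LSeq.val X = C.val := by
  induction h with
  | id a => rfl
  | _ =>
    simp_all only [LSeq.val_append, LSeq.val_cons_ty, LSeq.val_cons_op, LSeq.val_cons_cl,
      LSeq.val_nil, LType.val_ldiv, LType.val_rdiv, LType.val_mul, LType.val_dia, LType.val_box,
      ← mul_assoc, mul_one, eq_mul_inv_iff_mul_eq, mul_inv_cancel_right, inv_mul_cancel_right,
      eq_inv_mul_iff_mul_eq]

variable [DecidableEq α] {g : Letter α}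

theorem LType.occ_cl (i : α) (A : LType α) : A.occ (.cl i) = A.occ (.op i) := by
  induction A with
  | prim => rfl
  | ldiv A B ihA ihB => simp only [occ_ldiv, ihA, ihB]
  | rdiv B A ihB ihA => simp only [occ_rdiv, ihA, ihB]
  | mul A B ihA ihB => simp only [occ_mul, ihA, ihB]
  | dia j A ih => simp [occ_dia, ih, List.count_singleton, add_comm]
  | box j A ih => simp [occ_box, ih, List.count_singleton, add_comm]

theorem LSeq.exponent_val (h : ∀ A, .ty A ∈ X → A.occ (.op i) = 0) :
    exponent (.op i) (LSeq.val X) = .ofAdd (LSeq.occ X (.op i) : ℤ) := by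
  induction X with
  | nil => simp [val_nil, occ_nil]
  | cons t X ih =>
    have ih := ih fun A hA => h A (List.mem_cons_of_mem _ hA)
    cases t with
    | ty A =>
      have hA := h A List.mem_cons_self
      rw [val_cons_ty, map_mul, ih, occ_cons_ty, hA, LType.val, exponent_mk_eq_one hA, one_mul,
        zero_add]
    | op j =>
      rw [val_cons_op, map_mul, ih, occ_cons_op, Nat.cast_add, ofAdd_add]
      by_cases hj : j = i <;> simp [exponent, hj]
    | cl j =>
      rw [val_cons_cl, map_mul, ih, occ_cons_cl]
      simp [exponent]

/-- The label of a bracket also occurs in a type, since the exponent sums of both sides agree. -/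
theorem CutFree.exists_type_with_label (h : CutFree X C) (hi : .op i ∈ X) :
    (∃ A, .ty A ∈ X ∧ 0 < A.occ (.op i)) ∨ 0 < C.occ (.op i) := by
  by_contra! hne
  have hX := LSeq.exponent_val fun A hA => Nat.le_zero.1 (hne.1 A hA)
  have hC : exponent (.op i) C.val = 1 := exponent_mk_eq_one (Nat.le_zero.1 hne.2)
  rw [h.val_eq, hC] at hX
  obtain ⟨L, R, rfl⟩ := List.append_of_mem hi
  have : (LSeq.occ (L ++ .op i :: R) (.op i) : ℤ) = 0 := hX.symm
  simp only [LSeq.occ_append, LSeq.occ_cons_op, List.count_singleton_self] at this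
  omega

theorem LSeq.val_mem_avoiding (h : LSeq.occ X g = 0) : LSeq.val X ∈ avoiding g :=
  mk_mem_avoiding h

theorem val_mul_inv_mul_val_mem_avoiding
    (h : LSeq.occ X g + C.occ g + LSeq.occ Y g = 0) :
    LSeq.val X * C.val⁻¹ * LSeq.val Y ∈ avoiding g :=
  mul_mem (mul_mem (LSeq.val_mem_avoiding (by omega))
    (inv_mem (mk_mem_avoiding (show C.occ g = 0 by omega)))) (LSeq.val_mem_avoiding (by omega))

theorem LType.norm_val_le (A : LType α) : A.val.norm ≤ A.word.length := FreeGroup.norm_mk_le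

theorem Thin.occ_bracket (h : Thin (L ++ .op i :: (T ++ .cl i :: R)) C) :
    LSeq.occ L (.op i) + LSeq.occ T (.op i) + LSeq.occ R (.op i) + C.occ (.op i) ≤ 1 ∧
    LSeq.occ L (.cl i) + LSeq.occ T (.cl i) + LSeq.occ R (.cl i) + C.occ (.cl i) ≤ 1 := by
  have h₁ := h (.op i)
  have h₂ := h (.cl i)
  simp only [LSeq.occ_append, LSeq.occ_cons_op, LSeq.occ_cons_cl, List.count_singleton_self]
    at h₁ h₂
  omega

theorem norm_add_two_le_of_label_inside (h : CutFree (L ++ .op i :: (T ++ .cl i :: R)) C)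
    (ht : Thin (L ++ .op i :: (T ++ .cl i :: R)) C) (hA : .ty A ∈ T) (hi : 0 < A.occ (.op i)) :
    (LSeq.val (.op i :: (T ++ [.cl i]))).norm + 2 ≤ A.word.length := by
  obtain ⟨T₁, T₂, rfl⟩ := List.append_of_mem hA
  obtain ⟨ho, hc⟩ := ht.occ_bracket
  have hv := h.val_eq
  have hcl := A.occ_cl i
  simp only [LSeq.occ_append, LSeq.occ_cons_ty] at ho hc
  have hA : A.val⁻¹ = LSeq.val T₂ * .of (.cl i) *
      (LSeq.val R * C.val⁻¹ * LSeq.val L * .of (.op i) * LSeq.val T₁) := by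
    rw [← hv]
    simp only [LSeq.val_append, LSeq.val_cons_ty, LSeq.val_cons_op, LSeq.val_cons_cl]
    group
  have hT : LSeq.val (.op i :: (T₁ ++ .ty A :: T₂ ++ [.cl i])) =
      (LSeq.val R * C.val⁻¹ * LSeq.val L)⁻¹ := by
    rw [← hv]
    simp only [LSeq.val_append, LSeq.val_cons_ty, LSeq.val_cons_op, LSeq.val_cons_cl, LSeq.val_nil]
    group
  rw [hT, FreeGroup.norm_inv_eq]
  refine le_trans ?_ A.norm_val_le
  rw [← FreeGroup.norm_inv_eq (x := A.val), hA]
  exact norm_add_two_le_norm_mul_of_mul_of_mul (by simp)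
    (LSeq.val_mem_avoiding (by omega)) (val_mul_inv_mul_val_mem_avoiding (by omega))
    (val_mul_inv_mul_val_mem_avoiding (by omega))
    (LSeq.val_mem_avoiding (by omega)) (LSeq.val_mem_avoiding (by omega))

theorem norm_add_two_le_of_label_left (h : CutFree (L ++ .op i :: (T ++ .cl i :: R)) C)
    (ht : Thin (L ++ .op i :: (T ++ .cl i :: R)) C) (hA : .ty A ∈ L) (hi : 0 < A.occ (.op i)) :
    (LSeq.val T).norm + 2 ≤ A.word.length := by
  obtain ⟨L₁, L₂, rfl⟩ := List.append_of_mem hA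
  obtain ⟨ho, hc⟩ := ht.occ_bracket
  have hv := h.val_eq
  have hcl := A.occ_cl i
  simp only [LSeq.occ_append, LSeq.occ_cons_ty] at ho hc
  have hA : A.val⁻¹ = LSeq.val L₂ * .of (.op i) * (LSeq.val T * .of (.cl i) *
      (LSeq.val R * C.val⁻¹ * LSeq.val L₁)) := by
    rw [← hv]
    simp only [LSeq.val_append, LSeq.val_cons_ty, LSeq.val_cons_op, LSeq.val_cons_cl]
    group
  refine le_trans ?_ A.norm_val_le
  rw [← FreeGroup.norm_inv_eq (x := A.val), hA]
  exact norm_add_two_le_norm_mul_of_mul_of_mul (by simp)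
    (LSeq.val_mem_avoiding (by omega)) (LSeq.val_mem_avoiding (by omega))
    (LSeq.val_mem_avoiding (by omega))
    (val_mul_inv_mul_val_mem_avoiding (by omega))
    (val_mul_inv_mul_val_mem_avoiding (by omega))

theorem norm_add_two_le_of_label_right (h : CutFree (L ++ .op i :: (T ++ .cl i :: R)) C)
    (ht : Thin (L ++ .op i :: (T ++ .cl i :: R)) C) (hA : .ty A ∈ R) (hi : 0 < A.occ (.op i)) :
    (LSeq.val T).norm + 2 ≤ A.word.length := by
  obtain ⟨R₁, R₂, rfl⟩ := List.append_of_mem hA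
  obtain ⟨ho, hc⟩ := ht.occ_bracket
  have hv := h.val_eq
  have hcl := A.occ_cl i
  simp only [LSeq.occ_append, LSeq.occ_cons_ty] at ho hc
  have hA : A.val⁻¹ = LSeq.val R₂ * C.val⁻¹ * LSeq.val L * .of (.op i) *
      (LSeq.val T * .of (.cl i) * LSeq.val R₁) := by
    rw [← hv]
    simp only [LSeq.val_append, LSeq.val_cons_ty, LSeq.val_cons_op, LSeq.val_cons_cl]
    group
  refine le_trans ?_ A.norm_val_le
  rw [← FreeGroup.norm_inv_eq (x := A.val), hA]
  exact norm_add_two_le_norm_mul_of_mul_of_mul (by simp)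
    (val_mul_inv_mul_val_mem_avoiding (by omega))
    (LSeq.val_mem_avoiding (by omega)) (LSeq.val_mem_avoiding (by omega))
    (LSeq.val_mem_avoiding (by omega)) (LSeq.val_mem_avoiding (by omega))

theorem norm_add_two_le_of_label_succedent (h : CutFree (L ++ .op i :: (T ++ .cl i :: R)) C)
    (ht : Thin (L ++ .op i :: (T ++ .cl i :: R)) C) (hi : 0 < C.occ (.op i)) :
    (LSeq.val T).norm + 2 ≤ C.word.length := by
  obtain ⟨ho, hc⟩ := ht.occ_bracket
  have hcl := C.occ_cl i
  have hC : C.val = LSeq.val L * .of (.op i) * (LSeq.val T * .of (.cl i) * LSeq.val R) := by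
    simp only [← h.val_eq, LSeq.val_append, LSeq.val_cons_op, LSeq.val_cons_cl, mul_assoc]
  refine le_trans ?_ C.norm_val_le
  rw [hC]
  exact norm_add_two_le_norm_mul_of_mul_of_mul (by simp)
    (LSeq.val_mem_avoiding (by omega)) (LSeq.val_mem_avoiding (by omega))
    (LSeq.val_mem_avoiding (by omega)) (LSeq.val_mem_avoiding (by omega))
    (LSeq.val_mem_avoiding (by omega))

/-- In a thin derivable sequent some type is long enough to spare two letters for each bracket
pair, by which the value of the pair or of its content is then bounded. -/
theorem exists_norm_add_two_le (h : CutFree (L ++ .op i :: (T ++ .cl i :: R)) C)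
    (ht : Thin (L ++ .op i :: (T ++ .cl i :: R)) C) :
    ∃ A, (.ty A ∈ L ++ .op i :: (T ++ .cl i :: R) ∨ A = C) ∧
      ((LSeq.val T).norm + 2 ≤ A.word.length ∨
        (LSeq.val (.op i :: (T ++ [.cl i]))).norm + 2 ≤ A.word.length) := by
  rcases h.exists_type_with_label (i := i) (by simp) with ⟨A, hA, hi⟩ | hi
  · refine ⟨A, .inl hA, ?_⟩
    obtain hL | hT | hR : .ty A ∈ L ∨ .ty A ∈ T ∨ .ty A ∈ R := by simpa using hA
    exacts [.inl (norm_add_two_le_of_label_left h ht hL hi),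
      .inr (norm_add_two_le_of_label_inside h ht hT hi),
      .inl (norm_add_two_le_of_label_right h ht hR hi)]
  · exact ⟨C, .inr rfl, .inl (norm_add_two_le_of_label_succedent h ht hi)⟩

end Value

/-! ### Hedges and their linearisations -/

section Parse

/-- The inverse of linearisation. If `parse X = (G, S)`, then `G` is the hedge in front of the first
unmatched closing bracket of `X`, and `S` lists the hedges behind the unmatched closing brackets. -/
def parse : List (Token Unit PTy) → PHedge × List PHedge
  | [] => ([], [])
  | .ty A :: X => (.leaf A :: (parse X).1, (parse X).2)
  | .op _ :: X => (.node (parse X).1 :: (parse X).2.headD [], (parse X).2.tail)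
  | .cl _ :: X => ([], (parse X).1 :: (parse X).2)

variable {G G' : PHedge} {X L R : List (Token Unit PTy)} {A : PTy}

mutual
theorem parse_flatTree_append : ∀ (t : PTree) (X : List (Token Unit PTy)),
    parse (flatTree t ++ X) = (t :: (parse X).1, (parse X).2)
  | .leaf _, _ => rfl
  | .node G, X => by
    simp only [flatTree, List.cons_append, List.append_assoc, parse, parse_flatHedge_append G,
      List.nil_append, List.append_nil, List.headD_cons, List.tail_cons]
theorem parse_flatHedge_append : ∀ (G : PHedge) (X : List (Token Unit PTy)),
    parse (flatHedge G ++ X) = (G ++ (parse X).1, (parse X).2)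
  | [], _ => rfl
  | t :: G, X => by
    simp only [flatHedge, List.append_assoc, parse_flatTree_append t, parse_flatHedge_append G,
      List.cons_append]
end

theorem flatHedge_injective : Function.Injective flatHedge :=
  Function.LeftInverse.injective (g := fun X => (parse X).1) fun G => by
    simpa [parse] using congrArg Prod.fst (parse_flatHedge_append G [])

theorem length_parse_and_flatHedge_parse {b : Bool} {s : List Unit} (h : Runs (b, s) X (true, [])) :
    (parse X).2.length = s.length ∧
      flatHedge (parse X).1 ++ (parse X).2.flatMap (fun G => .cl () :: flatHedge G) = X := by
  induction X generalizing b s with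
  | nil =>
    obtain ⟨-, rfl⟩ := Prod.mk.inj h
    exact ⟨rfl, rfl⟩
  | cons x X ih =>
    cases x with
    | ty A =>
      obtain ⟨hs, hX⟩ := ih h
      exact ⟨hs, by simpa [parse, flatHedge, flatTree] using hX⟩
    | op i =>
      obtain ⟨hs, hX⟩ := ih (s := i :: s) h
      obtain ⟨H, S, hS⟩ := List.exists_cons_of_length_eq_add_one hs
      rw [hS] at hs hX
      simp only [parse, hS, flatHedge, flatTree]
      exact ⟨by simpa using hs, by simpa using hX⟩
    | cl i =>
      obtain ⟨s', -, rfl, h⟩ := h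
      obtain ⟨hs, hX⟩ := ih h
      exact ⟨congrArg (· + 1) hs, by simpa [parse, flatHedge] using hX⟩

theorem exists_flatHedge_eq (h : WellBracketed X) : ∃ G, flatHedge G = X := by
  obtain ⟨hS, hX⟩ := length_parse_and_flatHedge_parse h
  rw [List.length_eq_zero_iff.1 hS] at hX
  exact ⟨_, by simpa using hX⟩

/-- The context with the tree `t` put in front. -/
def consCtx (t : PTree) : PCtx → PCtx
  | .hole G H => .hole (t :: G) H
  | .brk D G H => .brk D (t :: G) H

theorem plug_consCtx (t : PTree) (D : PCtx) (Z : PHedge) :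
    (consCtx t D).plug Z = t :: D.plug Z := by
  cases D <;> rfl

theorem exists_ctx_of_flatHedge_eq : ∀ {G : PHedge} {L R : List (Token Unit PTy)},
    flatHedge G = L ++ .ty A :: R →
      ∃ D : PCtx, G = D.plug [.leaf A] ∧ ∀ Z, flatHedge (D.plug Z) = L ++ (flatHedge Z ++ R)
  | [], L, R, h => by simp [flatHedge] at h
  | .leaf _ :: G, [], R, h => by
    obtain ⟨rfl, rfl⟩ : _ = A ∧ flatHedge G = R := by simpa [flatHedge, flatTree] using h
    exact ⟨.hole [] G, rfl, fun Z => flatHedge_append Z G⟩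
  | .leaf A' :: G, _ :: L, R, h => by
    obtain ⟨rfl, hG⟩ := List.cons.inj h
    obtain ⟨D, rfl, hD⟩ := exists_ctx_of_flatHedge_eq hG
    exact ⟨consCtx (.leaf A') D, (plug_consCtx _ _ _).symm, fun Z => by
      rw [plug_consCtx, flatHedge, hD]; rfl⟩
  | .node G :: H, [], R, h => by simp [flatHedge, flatTree] at h
  | .node G :: H, _ :: L, R, h => by
    obtain ⟨rfl, hGH⟩ : _ ∧ flatHedge G ++ .cl () :: flatHedge H = L ++ .ty A :: R := by
      simpa [flatHedge, flatTree] using h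
    rcases List.append_eq_append_iff.1 hGH with ⟨_ | ⟨_, L'⟩, rfl, hL'⟩ | ⟨_ | ⟨_, R'⟩, hG, hR'⟩
    · simp at hL'
    · obtain ⟨rfl, hH⟩ := List.cons.inj hL'
      obtain ⟨D, rfl, hD⟩ := exists_ctx_of_flatHedge_eq hH
      exact ⟨consCtx (.node G) D, (plug_consCtx _ _ _).symm, fun Z => by
        simp [plug_consCtx, flatHedge, flatTree, hD]⟩
    · simp at hR'
    · obtain ⟨rfl, rfl⟩ := List.cons.inj hR'
      obtain ⟨D, rfl, hD⟩ := exists_ctx_of_flatHedge_eq hG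
      exact ⟨.brk D [] H, rfl, fun Z => by simp [PCtx.plug, flatHedge, flatTree, hD]⟩

end Parse

/-! ### Erasure of labels -/

section Erase

/-- Erasure of the labels of a type, its primitive types being renamed by `f`. -/
def LType.erase {α : Type*} (f : α → ℕ) : LType α → PTy
  | prim a => .prim (f a)
  | ldiv A B => .ldiv (A.erase f) (B.erase f)
  | rdiv B A => .rdiv (B.erase f) (A.erase f)
  | mul A B => .mul (A.erase f) (B.erase f)
  | dia _ A => .dia (A.erase f)
  | box _ A => .box (A.erase f)

/-- Erasure of the labels of a linearised hedge. -/
abbrev LSeq.erase {α : Type*} (f : α → ℕ) (X : LSeq α) : List (Token Unit PTy) :=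
  List.map (Token.map (fun _ => ()) (LType.erase f)) X

variable {α : Type*} {f : α → ℕ} {A C : LType α} {X : LSeq α}

theorem LType.lenP_erase : lenP (A.erase f) = A.word.length := by
  induction A <;> simp_all [erase, lenP, word]

theorem LType.over_erase [DecidableEq α] {B : Finset ℕ} :
    (A.erase f).over B ↔ ∀ a, A.occ (.prim a) ≠ 0 → f a ∈ B := by
  induction A with
  | prim a => simp [erase, PTy.over, occ_prim, List.count_singleton]
  | dia | box => simp_all [erase, PTy.over, occ_dia, occ_box]
  | _ => simp_all only [erase, PTy.over, occ_ldiv, occ_rdiv, occ_mul, ne_eq, Nat.add_eq_zero_iff,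
      not_and_or, or_imp, forall_and]

theorem LType.erase_map {β : Type*} (φ : β → α) (A : LType β) :
    (A.map φ).erase f = A.erase (f ∘ φ) := by
  induction A <;> simp_all only [LType.map, erase, Function.comp_apply]

theorem LSeq.erase_map {β : Type*} (φ : β → α) (X : LSeq β) :
    LSeq.erase f (LSeq.map φ X) = LSeq.erase (f ∘ φ) X := by
  rw [LSeq.erase, List.map_map]
  refine List.map_congr_left fun x _ => ?_
  cases x <;> simp [LType.erase_map]

theorem erase_embed (A : PTy) : (embed A).erase id = A := by
  induction A <;> simp_all only [embed, LType.erase, id_eq]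

theorem erase_map_embed (X : List (Token Unit PTy)) :
    LSeq.erase id (X.map (Token.map (fun _ => 0) embed)) = X := by
  rw [LSeq.erase, List.map_map]
  refine List.map_id'' (fun x => ?_) X
  cases x <;> simp [erase_embed]

theorem exists_hedge_of_wellBracketed (h : WellBracketed X) :
    ∃ G, flatHedge G = LSeq.erase f X :=
  exists_flatHedge_eq (h.map _ _)

theorem exists_ctx_of_wellBracketed {L R : LSeq α} (h : WellBracketed (L ++ .ty A :: R)) :
    ∃ D : PCtx, ∀ Z, flatHedge (D.plug Z) = LSeq.erase f L ++ (flatHedge Z ++ LSeq.erase f R) := by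
  obtain ⟨G, hG⟩ := exists_hedge_of_wellBracketed (f := f) h
  obtain ⟨D, -, hD⟩ := exists_ctx_of_flatHedge_eq (by simpa using hG)
  exact ⟨D, hD⟩

/-- The relation `P` between hedges and types holds for the erasure of a labelled sequent, whichever
hedge linearises to the erased antecedent. -/
def HoldsErased (P : PHedge → PTy → Prop) (f : α → ℕ) (X : LSeq α) (C : LType α) : Prop :=
  ∀ G, flatHedge G = LSeq.erase f X → P G (C.erase f)

namespace HoldsErased

variable {B : LType α} {G D L R : LSeq α} {i : α}

theorem ldivL (hG : WellBracketed G) (h : WellBracketed (L ++ .ty B :: R))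
    (ihG : HoldsErased PProv f G A) (ih : HoldsErased PProv f (L ++ .ty B :: R) C) :
    HoldsErased PProv f (L ++ (G ++ .ty (.ldiv A B) :: R)) C := by
  intro H hH
  obtain ⟨G', hG'⟩ := exists_hedge_of_wellBracketed (f := f) hG
  obtain ⟨K, hK⟩ := exists_ctx_of_wellBracketed (f := f) h
  obtain rfl : H = K.plug (G' ++ [.leaf (.ldiv (A.erase f) (B.erase f))]) :=
    flatHedge_injective (by simp [hH, hK, flatHedge_append, hG', flatHedge, flatTree, LType.erase])
  exact .ldivL _ _ _ _ _ (ihG _ hG') (ih _ (by simp [hK, flatHedge, flatTree]))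

theorem rdivL (hG : WellBracketed G) (h : WellBracketed (L ++ .ty B :: R))
    (ihG : HoldsErased PProv f G A) (ih : HoldsErased PProv f (L ++ .ty B :: R) C) :
    HoldsErased PProv f (L ++ .ty (.rdiv B A) :: (G ++ R)) C := by
  intro H hH
  obtain ⟨G', hG'⟩ := exists_hedge_of_wellBracketed (f := f) hG
  obtain ⟨K, hK⟩ := exists_ctx_of_wellBracketed (f := f) h
  obtain rfl : H = K.plug (.leaf (.rdiv (B.erase f) (A.erase f)) :: G') :=
    flatHedge_injective (by simp [hH, hK, hG', flatHedge, flatTree, LType.erase])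
  exact .rdivL _ _ _ _ _ (ihG _ hG') (ih _ (by simp [hK, flatHedge, flatTree]))

theorem ldivR (hX : X ≠ []) (ih : HoldsErased PProv f (.ty A :: X) B) :
    HoldsErased PProv f X (.ldiv A B) := by
  intro G hG
  refine .ldivR _ _ _ ?_ (ih _ (by simp [flatHedge, flatTree, hG]))
  rintro rfl
  exact hX (by simpa [flatHedge] using hG)

theorem rdivR (hX : X ≠ []) (ih : HoldsErased PProv f (X ++ [.ty A]) B) :
    HoldsErased PProv f X (.rdiv B A) := by
  intro G hG
  refine .rdivR _ _ _ ?_ (ih _ (by simp [flatHedge_append, flatHedge, flatTree, hG]))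
  rintro rfl
  exact hX (by simpa [flatHedge] using hG)

theorem mulL (ih : HoldsErased PProv f (L ++ .ty A :: .ty B :: R) C) :
    HoldsErased PProv f (L ++ .ty (.mul A B) :: R) C := by
  intro G hG
  obtain ⟨K, rfl, hK⟩ := exists_ctx_of_flatHedge_eq (by simpa using hG)
  exact .mulL _ _ _ _ (ih _ (by simp [hK, flatHedge, flatTree]))

theorem mulR (hG : WellBracketed G) (hD : WellBracketed D) (ihG : HoldsErased PProv f G A)
    (ihD : HoldsErased PProv f D B) : HoldsErased PProv f (G ++ D) (.mul A B) := by
  intro H hH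
  obtain ⟨G', hG'⟩ := exists_hedge_of_wellBracketed (f := f) hG
  obtain ⟨D', hD'⟩ := exists_hedge_of_wellBracketed (f := f) hD
  obtain rfl : H = G' ++ D' := flatHedge_injective (by simp [hH, flatHedge_append, hG', hD'])
  exact .mulR _ _ _ _ (ihG _ hG') (ihD _ hD')

theorem diaL (ih : HoldsErased PProv f (L ++ .op i :: .ty A :: .cl i :: R) C) :
    HoldsErased PProv f (L ++ .ty (.dia i A) :: R) C := by
  intro G hG
  obtain ⟨K, rfl, hK⟩ := exists_ctx_of_flatHedge_eq (by simpa using hG)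
  exact .diaL _ _ _ (ih _ (by simp [hK, flatHedge, flatTree]))

theorem diaR (hG : WellBracketed G) (ih : HoldsErased PProv f G A) :
    HoldsErased PProv f (.op i :: (G ++ [.cl i])) (.dia i A) := by
  intro H hH
  obtain ⟨G', hG'⟩ := exists_hedge_of_wellBracketed (f := f) hG
  obtain rfl : H = [.node G'] := flatHedge_injective (by simp [hH, hG', flatHedge, flatTree])
  exact .diaR _ _ (ih _ hG')

theorem boxL (h : WellBracketed (L ++ .ty A :: R))
    (ih : HoldsErased PProv f (L ++ .ty A :: R) C) :
    HoldsErased PProv f (L ++ .op i :: .ty (.box i A) :: .cl i :: R) C := by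
  intro H hH
  obtain ⟨K, hK⟩ := exists_ctx_of_wellBracketed (f := f) h
  obtain rfl : H = K.plug [.node [.leaf (.box (A.erase f))]] :=
    flatHedge_injective (by simp [hH, hK, flatHedge, flatTree, LType.erase])
  exact .boxL _ _ _ (ih _ (by simp [hK, flatHedge, flatTree]))

theorem boxR (ih : HoldsErased PProv f (.op i :: (G ++ [.cl i])) A) :
    HoldsErased PProv f G (.box i A) :=
  fun H hH => .boxR _ _ (ih _ (by simp [flatHedge, flatTree, hH]))

end HoldsErased

theorem CutFree.holdsErased_pProv (h : CutFree X C) : HoldsErased PProv f X C := by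
  induction h with
  | id a =>
    intro G hG
    obtain rfl : G = [.leaf (.prim (f a))] := flatHedge_injective hG
    exact .id _
  | ldivL G L R A B C hG h ihG ih => exact .ldivL hG.wellBracketed h.wellBracketed ihG ih
  | rdivL G L R A B C hG h ihG ih => exact .rdivL hG.wellBracketed h.wellBracketed ihG ih
  | ldivR X A B hX _ ih => exact ih.ldivR hX
  | rdivR X A B hX _ ih => exact ih.rdivR hX
  | mulL L R A B C _ ih => exact ih.mulL
  | mulR G D A B hG hD ihG ihD => exact .mulR hG.wellBracketed hD.wellBracketed ihG ihD
  | diaL i L R A C _ ih => exact ih.diaL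
  | diaR i G A hG ih => exact ih.diaR hG.wellBracketed
  | boxL i L R A C h ih => exact ih.boxL h.wellBracketed
  | boxR i G A _ _ ih => exact ih.boxR

theorem HoldsErased.cut {S : Set (PHedge × PTy)} {L T R : LSeq α} (hT : WellBracketed T)
    (h : WellBracketed (L ++ .ty A :: R)) (ihT : HoldsErased (CutDeriv S) f T A)
    (ih : HoldsErased (CutDeriv S) f (L ++ .ty A :: R) C) :
    HoldsErased (CutDeriv S) f (L ++ (T ++ R)) C := by
  intro H hH
  obtain ⟨G, hG⟩ := exists_hedge_of_wellBracketed (f := f) hT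
  obtain ⟨K, hK⟩ := exists_ctx_of_wellBracketed (f := f) h
  obtain rfl : H = K.plug G := flatHedge_injective (by simp [hH, hK, hG])
  exact .cut _ _ _ _ (ihT _ hG) (ih _ (by simp [hK, flatHedge, flatTree]))

theorem HoldsErased.base {S : Set (PHedge × PTy)} {G : PHedge} (h : (G, C.erase f) ∈ S)
    (hG : flatHedge G = LSeq.erase f X) : HoldsErased (CutDeriv S) f X C := by
  intro H hH
  obtain rfl : H = G := flatHedge_injective (hH.trans hG.symm)
  exact .base _ _ h

end Erase

/-! ### Reduction to short sequents -/

theorem flatHedge_map_leaf_erase {α : Type*} (f : α → ℕ) (As : List (LType α)) :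
    flatHedge ((As.map (LType.erase f)).map .leaf) = LSeq.erase f (As.map .ty) := by
  induction As with
  | nil => rfl
  | cons A As ih => rw [List.map_cons, List.map_cons, flatHedge, ih]; rfl

theorem holdsErased_dia {α : Type*} {f : α → ℕ} {B : Finset ℕ} {m : ℕ} {i : α} {E : LType α}
    (hE : (E.erase f).over B) (hm : E.word.length + 2 ≤ m) :
    HoldsErased (CutDeriv (TBm B m)) f [.op i, .ty E, .cl i] (.dia i E) :=
  .base (.inl (.inr ⟨_, hE, LType.lenP_erase.trans_le (by omega), rfl⟩)) rfl

theorem holdsErased_box {α : Type*} {f : α → ℕ} {B : Finset ℕ} {m : ℕ} {i : α} {E : LType α}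
    (hE : (E.erase f).over B) (hm : E.word.length + 2 ≤ m) :
    HoldsErased (CutDeriv (TBm B m)) f [.op i, .ty (.box i E), .cl i] E :=
  .base (.inr ⟨_, hE, LType.lenP_erase.trans_le (by omega), rfl⟩) rfl

theorem LType.length_word_dia {α : Type*} (i : α) (A : LType α) :
    (dia i A).word.length = A.word.length + 2 := by
  simp only [word, List.length_cons, List.length_append, List.length_nil]

theorem LType.length_word_box {α : Type*} (i : α) (A : LType α) :
    (box i A).word.length = A.word.length + 2 := by
  simp only [word, List.length_cons, List.length_append, List.length_nil]

theorem LSeq.exists_ty_of_occ_prim_ne_zero {α : Type*} [DecidableEq α] {X : LSeq α} {a : α}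
    (h : LSeq.occ X (.prim a) ≠ 0) : ∃ A, .ty A ∈ X ∧ A.occ (.prim a) ≠ 0 := by
  contrapose! h
  induction X with
  | nil => rfl
  | cons x X ih =>
    have hX := ih fun A hA => h A (.tail _ hA)
    cases x with
    | ty A => rw [occ_cons_ty, hX, h A (.head _)]
    | op i => rw [occ_cons_op, hX]; rfl
    | cl i => rw [occ_cons_cl, hX]; rfl

theorem LSeq.val_map_ty {α : Type*} (As : List (LType α)) :
    LSeq.val (As.map .ty) = (As.map LType.val).prod := by
  induction As with
  | nil => rfl
  | cons A As ih => rw [List.map_cons, val_cons_ty, ih, List.map_cons, List.prod_cons]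

/-- The invariant of the reduction to axioms: a thin derivable sequent whose types have length at
most `m` and whose erasure, with respect to the naming `f` of its primitive types, is over `B`. -/
structure Admissible {α : Type*} [DecidableEq α] (f : α → ℕ) (B : Finset ℕ) (m : ℕ) (X : LSeq α)
    (C : LType α) : Prop where
  cutFree : CutFree X C
  thin : Thin X C
  name_mem : ∀ a, LSeq.occ X (.prim a) + C.occ (.prim a) ≠ 0 → f a ∈ B
  length_le : ∀ A, .ty A ∈ X ∨ A = C → A.word.length ≤ m

namespace Admissible

variable {α : Type*} [DecidableEq α] {f : α → ℕ} {B : Finset ℕ} {m : ℕ} {i : α}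
  {L R T X : LSeq α} {A C E : LType α}

theorem over_erase (h : Admissible f B m X C) (hA : .ty A ∈ X ∨ A = C) : (A.erase f).over B := by
  refine LType.over_erase.2 fun a ha => h.name_mem a ?_
  rcases hA with hA | rfl
  · obtain ⟨X₁, X₂, rfl⟩ := List.append_of_mem hA
    rw [LSeq.occ_append, LSeq.occ_cons_ty]
    omega
  · omega

theorem holdsErased_of_length_le_two {As : List (LType α)} (h : Admissible f B m (As.map .ty) C)
    (hAs : As.length ≤ 2) : HoldsErased (CutDeriv (TBm B m)) f (As.map .ty) C := by
  have hflat := flatHedge_map_leaf_erase f As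
  refine .base (.inl (.inl ⟨_, _, rfl, by simpa using hAs, fun D hD => ?_,
    h.cutFree.holdsErased_pProv _ hflat⟩)) hflat
  obtain ⟨A, hA, rfl⟩ : ∃ A, (.ty A ∈ (As.map .ty : LSeq α) ∨ A = C) ∧ A.erase f = D := by
    rcases List.mem_cons.1 hD with rfl | hD
    · exact ⟨C, .inr rfl, rfl⟩
    · obtain ⟨A, hA, rfl⟩ := List.mem_map.1 hD
      exact ⟨A, .inl (List.mem_map_of_mem hA), rfl⟩
  exact ⟨h.over_erase hA, LType.lenP_erase.trans_le (h.length_le A hA)⟩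

/-- By thinness every letter occurs at most once in the interpolant, so its word is reduced. -/
theorem exists_interpolant (h : Admissible f B m (L ++ (T ++ R)) C) (hT : WellBracketed T)
    (hm : (LSeq.val T).norm ≤ m) :
    ∃ E : LType α, E.word.length = (LSeq.val T).norm ∧ Admissible f B m T E ∧
      Admissible f B m (L ++ .ty E :: R) C := by
  obtain ⟨E, hTE, hEC, hocc⟩ := h.cutFree.interpolable L T R rfl hT
  have hthin (g) : LSeq.occ L g + LSeq.occ T g + LSeq.occ R g + C.occ g ≤ 2 := by
    have := h.thin g
    simp only [LSeq.occ_append] at this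
    omega
  have hname (a) (ha : LSeq.occ L (.prim a) + LSeq.occ T (.prim a) + LSeq.occ R (.prim a) +
      C.occ (.prim a) ≠ 0) : f a ∈ B :=
    h.name_mem a (by simp only [LSeq.occ_append]; omega)
  have hlen : E.word.length = (LSeq.val T).norm := by
    rw [hTE.val_eq, LType.val, norm_mk_of_nodup]
    refine List.nodup_iff_count_le_one.2 fun g => ?_
    have hE := hocc g
    have := hthin g
    rw [LType.occ] at hE
    omega
  refine ⟨E, hlen, ⟨hTE, fun g => ?_, fun a ha => hname a ?_, fun A hA => ?_⟩,
    hEC, fun g => ?_, fun a ha => hname a ?_, fun A hA => ?_⟩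
  · have := hocc g; have := hthin g; omega
  · have := hocc (.prim a); omega
  · rcases hA with hA | rfl
    exacts [h.length_le A (.inl (by simp [hA])), hlen.trans_le hm]
  · have := hocc g; have := hthin g; simp only [LSeq.occ_append, LSeq.occ_cons_ty]; omega
  · have := hocc (.prim a); simp only [LSeq.occ_append, LSeq.occ_cons_ty] at ha; omega
  · obtain (hA | rfl | hA) | rfl : (.ty A ∈ L ∨ A = E ∨ .ty A ∈ R) ∨ A = C := by
      simpa using hA
    exacts [h.length_le A (.inl (by simp [hA])), hlen.trans_le hm,
      h.length_le A (.inl (by simp [hA])), h.length_le A (.inr rfl)]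

theorem diaL (h : Admissible f B m (L ++ .op i :: .ty E :: .cl i :: R) C)
    (hm : E.word.length + 2 ≤ m) : Admissible f B m (L ++ .ty (.dia i E) :: R) C := by
  have hocc (g) : LSeq.occ (L ++ .ty (.dia i E) :: R) g =
      LSeq.occ (L ++ .op i :: .ty E :: .cl i :: R) g := by
    simp only [LSeq.occ_append, LSeq.occ_cons_ty, LSeq.occ_cons_op, LSeq.occ_cons_cl,
      LType.occ_dia]
    omega
  refine ⟨.diaL _ _ _ _ _ h.cutFree, fun g => hocc g ▸ h.thin g,
    fun a ha => h.name_mem a (hocc _ ▸ ha), fun A hA => ?_⟩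
  obtain (hA | rfl | hA) | rfl : (.ty A ∈ L ∨ A = .dia i E ∨ .ty A ∈ R) ∨ A = C := by
    simpa using hA
  exacts [h.length_le A (.inl (by simp [hA])), (LType.length_word_dia i E).trans_le hm,
    h.length_le A (.inl (by simp [hA])), h.length_le A (.inr rfl)]

theorem boxR (h : Admissible f B m (.op i :: (T ++ [.cl i])) E) (hT : WellBracketed T)
    (hm : E.word.length + 2 ≤ m) : Admissible f B m T (.box i E) := by
  have hocc (g) : LSeq.occ T g + (LType.box i E).occ g =
      LSeq.occ (.op i :: (T ++ [.cl i])) g + E.occ g := by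
    simp only [LSeq.occ_append, LSeq.occ_cons_op, LSeq.occ_cons_cl, LSeq.occ_nil, LType.occ_box]
    omega
  refine ⟨.boxR _ _ _ hT h.cutFree, fun g => hocc g ▸ h.thin g,
    fun a ha => h.name_mem a (hocc _ ▸ ha), fun A hA => ?_⟩
  rcases hA with hA | rfl
  exacts [h.length_le A (.inl (by simp [hA])), (LType.length_word_box i E).trans_le hm]

theorem holdsErased_of_segment (h : Admissible f B m (L ++ (T ++ R)) C) (hT : WellBracketed T)
    (hm : (LSeq.val T).norm ≤ m) (hT₂ : 2 ≤ T.length) (hlt : T.length < (L ++ (T ++ R)).length)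
    (ih : ∀ Y D, Y.length < (L ++ (T ++ R)).length → Admissible f B m Y D →
      HoldsErased (CutDeriv (TBm B m)) f Y D) :
    HoldsErased (CutDeriv (TBm B m)) f (L ++ (T ++ R)) C := by
  obtain ⟨E, -, hTE, hEC⟩ := h.exists_interpolant hT hm
  refine .cut hT hEC.cutFree.wellBracketed (ih _ _ hlt hTE) (ih _ _ ?_ hEC)
  simp only [List.length_append, List.length_cons]
  omega

theorem holdsErased_map_ty {As : List (LType α)} (h : Admissible f B m (As.map .ty) C)
    (ih : ∀ Y D, Y.length < (As.map Token.ty : LSeq α).length → Admissible f B m Y D →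
      HoldsErased (CutDeriv (TBm B m)) f Y D) :
    HoldsErased (CutDeriv (TBm B m)) f (As.map .ty) C := by
  rcases Nat.lt_or_ge 2 As.length with h₃ | h₂
  swap
  · exact h.holdsErased_of_length_le_two h₂
  have hnorm (A) (hA : .ty A ∈ (As.map .ty : LSeq α) ∨ A = C) : A.val.norm ≤ m :=
    A.norm_val_le.trans (h.length_le A hA)
  have hprod : (As.map LType.val).prod.norm ≤ m := by
    rw [← LSeq.val_map_ty, h.cutFree.val_eq]
    exact hnorm C (.inr rfl)
  obtain ⟨L, T, R, hAs, hT₂, hlt, hT⟩ := exists_segment_norm_prod_le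
    (by rwa [List.length_map])
    (List.forall_mem_map.2 fun A hA => hnorm A (.inl (List.mem_map_of_mem hA))) hprod
  obtain ⟨As₁, As', rfl, rfl, h'⟩ := List.map_eq_append_iff.1 hAs
  obtain ⟨As₂, As₃, rfl, rfl, rfl⟩ := List.map_eq_append_iff.1 h'
  simp only [List.length_map] at hT₂ hlt
  simp only [List.map_append] at h ih ⊢
  refine h.holdsErased_of_segment (WellBracketed.map_ty ?_) (by rwa [LSeq.val_map_ty])
    (by rwa [List.length_map]) (by simpa using hlt) ih
  exact List.ne_nil_of_length_pos (by omega)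

theorem holdsErased_of_inside (h : Admissible f B m (L ++ .op i :: (T ++ .cl i :: R)) C)
    (hT : WellBracketed T) (hm : (LSeq.val T).norm + 2 ≤ m)
    (ih : ∀ Y D, Y.length < (L ++ .op i :: (T ++ .cl i :: R)).length → Admissible f B m Y D →
      HoldsErased (CutDeriv (TBm B m)) f Y D) :
    HoldsErased (CutDeriv (TBm B m)) f (L ++ .op i :: (T ++ .cl i :: R)) C := by
  obtain ⟨E, hEm, hTE, hEC⟩ :=
    exists_interpolant (L := L ++ [.op i]) (R := .cl i :: R) (by simpa using h) hT (by omega)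
  rw [← hEm] at hm
  have hEC' : Admissible f B m (L ++ .op i :: .ty E :: .cl i :: R) C := by simpa using hEC
  have hdia := hEC'.diaL hm
  have hcut := HoldsErased.cut ((WellBracketed.singleton_ty E).bracket i) hdia.cutFree.wellBracketed
    (holdsErased_dia (hTE.over_erase (.inr rfl)) hm) (ih _ _ (by simp) hdia)
  have := HoldsErased.cut hT hEC.cutFree.wellBracketed (ih _ _ (by simp; omega) hTE)
    (by simpa using hcut)
  simpa using this

theorem holdsErased_of_block (h : Admissible f B m (L ++ .op i :: (T ++ .cl i :: R)) C)
    (hT : WellBracketed T) (hm : (LSeq.val (.op i :: (T ++ [.cl i]))).norm + 2 ≤ m)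
    (ih : ∀ Y D, Y.length < (L ++ .op i :: (T ++ .cl i :: R)).length → Admissible f B m Y D →
      HoldsErased (CutDeriv (TBm B m)) f Y D) :
    HoldsErased (CutDeriv (TBm B m)) f (L ++ .op i :: (T ++ .cl i :: R)) C := by
  obtain ⟨E, hEm, hTE, hEC⟩ :=
    exists_interpolant (T := .op i :: (T ++ [.cl i])) (by simpa using h) (hT.bracket i) (by omega)
  rw [← hEm] at hm
  have hcut := HoldsErased.cut (L := [.op i]) (R := [.cl i]) (A := .box i E) hT
    ((WellBracketed.singleton_ty _).bracket i) (ih _ _ (by simp; omega) (hTE.boxR hT hm))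
    (holdsErased_box (hTE.over_erase (.inr rfl)) hm)
  have := HoldsErased.cut (hT.bracket i) hEC.cutFree.wellBracketed hcut
    (ih _ _ (by simp) hEC)
  simpa using this

theorem holdsErased (h : Admissible f B m X C) : HoldsErased (CutDeriv (TBm B m)) f X C := by
  induction hn : X.length using Nat.strong_induction_on generalizing X C with
  | _ n ih =>
    subst hn
    have ih' (Y D) (hY : Y.length < X.length) (hYD : Admissible f B m Y D) := ih _ hY hYD rfl
    rcases h.cutFree.wellBracketed.eq_map_ty_or_exists_bracket with
      ⟨As, rfl⟩ | ⟨L, i, T, R, hT, rfl⟩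
    · exact h.holdsErased_map_ty ih'
    · obtain ⟨A, hA, hTA | hTA⟩ := exists_norm_add_two_le h.cutFree h.thin
      · exact h.holdsErased_of_inside hT (hTA.trans (h.length_le A hA)) ih'
      · exact h.holdsErased_of_block hT (hTA.trans (h.length_le A hA)) ih'

end Admissible

/-! ### The equivalence -/

mutual
theorem mem_yieldTree {A : PTy} : ∀ {t : PTree}, A ∈ yieldTree t ↔ .ty A ∈ flatTree t
  | .leaf B => by simp [yieldTree, flatTree]
  | .node G => by simp [yieldTree, flatTree, mem_yieldHedge (G := G)]
theorem mem_yieldHedge {A : PTy} : ∀ {G : PHedge}, A ∈ yieldHedge G ↔ .ty A ∈ flatHedge G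
  | [] => by simp [yieldHedge, flatHedge]
  | t :: G => by
    simp [yieldHedge, flatHedge, mem_yieldTree (t := t), mem_yieldHedge (G := G)]
end

theorem PProv.refl (A : PTy) : PProv [.leaf A] A := by
  induction A with
  | prim p => exact .id p
  | ldiv A B ihA ihB =>
    exact .ldivR _ _ _ (by simp) (.ldivL [.leaf A] (.hole [] []) _ _ _ ihA ihB)
  | rdiv B A ihB ihA =>
    exact .rdivR _ _ _ (by simp) (.rdivL [.leaf A] (.hole [] []) _ _ _ ihA ihB)
  | mul A B ihA ihB => exact .mulL (.hole [] []) _ _ _ (.mulR [.leaf A] _ _ _ ihA ihB)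
  | dia A ih => exact .diaL (.hole [] []) _ _ (.diaR _ _ ih)
  | box A ih => exact .boxR _ _ (.boxL (.hole [] []) _ _ ih)

theorem pProv_of_mem_tBm {B : Finset ℕ} {m : ℕ} {G : PHedge} {C : PTy} (h : (G, C) ∈ TBm B m) :
    PProv G C := by
  obtain (⟨L, A, heq, -, -, hLA⟩ | ⟨A, -, -, heq⟩) | ⟨A, -, -, heq⟩ := h
  all_goals obtain ⟨rfl, rfl⟩ := Prod.mk.inj heq
  · exact hLA
  · exact .diaR _ _ (PProv.refl A)
  · exact .boxL (.hole [] []) _ _ (PProv.refl _)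

theorem CutDeriv.pProv {S : Set (PHedge × PTy)} {G : PHedge} {C : PTy} (h : CutDeriv S G C)
    (hS : ∀ s ∈ S, PProv s.1 s.2) : PProv G C := by
  induction h with
  | base G A hGA => exact hS _ hGA
  | cut G D A B _ _ ihG ihD => exact .cut _ _ _ _ ihG ihD

theorem PProv.cutDeriv_tBm {B : Finset ℕ} {m : ℕ} {G : PHedge} {C : PTy} (h : PProv G C)
    (hall : ∀ A ∈ yieldHedge G ++ [C], PTy.over B A ∧ lenP A ≤ m) : CutDeriv (TBm B m) G C := by
  obtain ⟨α, _, φ, X, C', hXC, hX, hC, hthin⟩ := (CutFree.of_pProv h).hasThinning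
  have hC' : C'.erase φ = C := by
    rw [← erase_embed C, ← hC, LType.erase_map, Function.id_comp]
  have hX' : LSeq.erase φ X = flatHedge G := by
    rw [← erase_map_embed (flatHedge G), ← hX, LSeq.erase_map, Function.id_comp]
  have hbound (A) (hA : .ty A ∈ X ∨ A = C') : (A.erase φ).over B ∧ lenP (A.erase φ) ≤ m := by
    refine hall _ (List.mem_append.2 ?_)
    rcases hA with hA | rfl
    · exact .inl (mem_yieldHedge.2 (hX' ▸ List.mem_map_of_mem hA))
    · exact .inr (List.mem_singleton.2 hC')
  have hadm : Admissible φ B m X C' := by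
    refine ⟨hXC, hthin, fun a ha => ?_, fun A hA => LType.lenP_erase.symm.trans_le (hbound A hA).2⟩
    obtain ⟨A, hA, hAa⟩ : ∃ A, (.ty A ∈ X ∨ A = C') ∧ A.occ (.prim a) ≠ 0 := by
      by_cases hCa : C'.occ (.prim a) = 0
      · obtain ⟨A, hA, hAa⟩ := LSeq.exists_ty_of_occ_prim_ne_zero (by simpa [hCa] using ha)
        exact ⟨A, .inl hA, hAa⟩
      · exact ⟨C', .inr rfl, hCa⟩
    exact LType.over_erase.1 (hbound A hA).1 a hAa
  exact hC' ▸ hadm.holdsErased G hX'.symm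

end BracketedLambek

/-- An L◇ sequent whose yield consists of types over `B` of length ≤ m is provable in
L◇ iff it is derivable from `T_{B,m}` using only the Cut rule. -/
theorem provable_iff_cut_derivable_from_TBm (B : Finset ℕ) (m : ℕ) (hm : 0 < m)
    (G : PHedge) (C : PTy)
    (hall : ∀ A ∈ yieldHedge G ++ [C], PTy.over B A ∧ lenP A ≤ m) :
    PProv G C ↔ CutDeriv (TBm B m) G C := by
  exact ⟨fun h => BracketedLambek.PProv.cutDeriv_tBm h hall,
    fun h => BracketedLambek.CutDeriv.pProv h fun _ hs => BracketedLambek.pProv_of_mem_tBm hs⟩
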